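/- arXiv:2103.00425 — 2 statements merged into one kernel-verified Lean document; each statement's English description precedes it below -/
import Mathlib

section
/- Let G be a finite Frobenius group with Frobenius kernel K and Frobenius complement H, and assume that H is not nilpotent and that every prime divisor of |H| is 2 or 5. Then G has perfect order classes if, and only if, K is a homocyclic 3-group of rank 4 (i.e., isomorphic to a direct product of four copies of a cyclic group of order 3^k for some positive integer k) and H is isomorphic to the metacyclic group ⟨a, b | a^5 = 1, b^{16} = 1, b⁻¹ a b = a^4⟩ of order 80. -/
/-- The number of elements of order `n` in the group `G`. -/
noncomputable def orderCount (G : Type*) [Group G] (n : ℕ) : ℕ :=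
  Nat.card {g : G // orderOf g = n}

/-- A group has *perfect order classes* if, for every positive integer `n`, the number of
elements of order `n` is either zero or a divisor of the order of the group. -/
def PerfectOrderClasses (G : Type*) [Group G] : Prop :=
  ∀ n : ℕ, 0 < n → orderCount G n = 0 ∨ orderCount G n ∣ Nat.card G

/-- `G` is a Frobenius group with Frobenius kernel `K` and Frobenius complement `H`:
`K` is a nontrivial proper normal subgroup, `H` a subgroup with `K ⊓ H = ⊥` and `KH = G`,
and the conjugation action of `H` on `K` is fixed-point-free. -/
def IsFrobeniusWith {G : Type*} [Group G] (K H : Subgroup G) : Prop :=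
  K ≠ ⊥ ∧ K ≠ ⊤ ∧ K.Normal ∧ K ⊓ H = ⊥ ∧
    (∀ g : G, ∃ k ∈ K, ∃ h ∈ H, g = k * h) ∧
    ∀ h ∈ H, h ≠ 1 → ∀ k ∈ K, k ≠ 1 → h * k * h⁻¹ ≠ k

/-- Relations of the metacyclic group `⟨a, b ∣ a^m = 1, b^n = 1, b⁻¹ a b = a^e⟩`,
with `a` the generator indexed by `true` and `b` the one indexed by `false`. -/
def metacyclicRels (m n : ℕ) (e : ℤ) : Set (FreeGroup Bool) :=
  {FreeGroup.of true ^ m, FreeGroup.of false ^ n,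
    (FreeGroup.of false)⁻¹ * FreeGroup.of true * FreeGroup.of false *
      (FreeGroup.of true ^ e)⁻¹}

/-- The metacyclic group `⟨a, b ∣ a^m = 1, b^n = 1, b⁻¹ a b = a^e⟩`. -/
abbrev Metacyclic (m n : ℕ) (e : ℤ) : Type := PresentedGroup (metacyclicRels m n e)

/-- A homomorphism `φ : H →* MulAut K` is a *Frobenius action* if every nontrivial element of `H`
acts on `K` without nontrivial fixed points. -/
def IsFrobeniusAction {H K : Type*} [Group H] [Group K] (φ : H →* MulAut K) : Prop :=
  ∀ h : H, h ≠ 1 → MonoidHom.FixedPointFree (φ h)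

namespace IsFrobeniusAction

variable {H K : Type*} [Group H] [Group K] {φ : H →* MulAut K}

/-- In a Frobenius action, the order of the acting group divides the number of points of every
invariant set of nontrivial elements. -/
theorem card_dvd_card (hφ : IsFrobeniusAction φ) (P : K → Prop)
    (hP : ∀ h k, P k → P (φ h k)) (hP1 : ¬ P 1) : Nat.card H ∣ Nat.card {k // P k} := by
  let _ : MulAction H {k // P k} :=
    { smul := fun h k => ⟨φ h k, hP h k k.2⟩
      one_smul := fun k => Subtype.ext (by change φ 1 k = k; simp)
      mul_smul := fun g h k => Subtype.ext (by change φ (g * h) k = φ g (φ h k); simp) }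
  have hstab : ∀ b : {k // P k}, MulAction.stabilizer H b = ⊥ := by
    intro b
    rw [Subgroup.eq_bot_iff_forall]
    intro h hh
    by_contra hne
    exact hP1 (hφ h hne b.1 (congrArg Subtype.val hh) ▸ b.2)
  rw [Nat.card_congr (MulAction.selfEquivOrbitsQuotientProd hstab), Nat.card_prod]
  exact dvd_mul_left _ _

theorem card_dvd_orderCount (hφ : IsFrobeniusAction φ) {n : ℕ} (hn : n ≠ 1) :
    Nat.card H ∣ orderCount K n :=
  hφ.card_dvd_card (fun k => orderOf k = n) (fun h k hk => by simpa using hk)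
    (by simpa using hn.symm)

/-- The number of nontrivial elements of an invariant subgroup is a multiple of the order of the
acting group. -/
theorem card_dvd_card_subgroup_sub_one [Finite K] (hφ : IsFrobeniusAction φ) (W : Subgroup K)
    (hW : ∀ h, ∀ w ∈ W, φ h w ∈ W) : Nat.card H ∣ Nat.card W - 1 := by
  have h := hφ.card_dvd_card (fun k => k ∈ W ∧ k ≠ 1)
    (fun h k hk => ⟨hW h k hk.1, by simpa using hk.2⟩) (by simp)
  have e : Nat.card {k : K // k ∈ W ∧ k ≠ 1} = Nat.card W - 1 := by
    have := Set.ncard_sdiff_singleton_of_mem (s := (W : Set K)) (a := 1) W.one_mem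
    rw [← Nat.card_coe_set_eq, ← Nat.card_coe_set_eq] at this
    exact this
  rwa [e] at h

theorem coprime_card [Finite K] (hφ : IsFrobeniusAction φ) :
    Nat.Coprime (Nat.card H) (Nat.card K) := by
  have h := hφ.card_dvd_card_subgroup_sub_one ⊤ (by simp)
  rw [Subgroup.card_top] at h
  have hpos : 0 < Nat.card K := Nat.card_pos
  refine Nat.Coprime.coprime_dvd_left h ?_
  have := Nat.coprime_self_sub_left (m := 1) (n := Nat.card K) hpos
  simpa using this

/-- Involutions invert the kernel of a Frobenius action. -/
theorem apply_eq_inv [Finite K] (hφ : IsFrobeniusAction φ) {t : H} (ht : t ≠ 1) (ht2 : t ^ 2 = 1)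
    (k : K) : φ t k = k⁻¹ :=
  congrFun ((hφ t ht).coe_eq_inv_of_involutive (fun k => by
    rw [← MulAut.mul_apply, ← map_mul, ← sq, ht2]; simp)) k

theorem mul_comm_of_two_dvd_card [Finite H] [Finite K] (hφ : IsFrobeniusAction φ)
    (h2 : 2 ∣ Nat.card H) (x y : K) : x * y = y * x := by
  obtain ⟨t, ht⟩ := exists_prime_orderOf_dvd_card' 2 h2
  have ht1 : t ≠ 1 := by rintro rfl; simp at ht
  exact (hφ t ht1).commute_all_of_involutive (fun k => by
    rw [← MulAut.mul_apply, ← map_mul, ← sq, ← ht, pow_orderOf_eq_one]; simp) x y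

/-- An element acting trivially on a nontrivial point is trivial. -/
theorem eq_of_apply_eq (hφ : IsFrobeniusAction φ) {g h : H} {k : K} (hk : k ≠ 1)
    (e : φ g k = φ h k) : g = h := by
  by_contra hne
  refine hk (hφ (h⁻¹ * g) (fun h1 => hne (inv_mul_eq_one.mp h1).symm) k ?_)
  rw [map_mul, MulAut.mul_apply, e, ← MulAut.mul_apply, ← map_mul]
  simp

theorem eq_of_sq_eq_one [Finite K] [Nontrivial K] (hφ : IsFrobeniusAction φ) {s t : H}
    (hs : s ≠ 1) (hs2 : s ^ 2 = 1) (ht : t ≠ 1) (ht2 : t ^ 2 = 1) : s = t := by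
  obtain ⟨k, hk⟩ := exists_ne (1 : K)
  exact hφ.eq_of_apply_eq hk (by rw [hφ.apply_eq_inv hs hs2, hφ.apply_eq_inv ht ht2])

end IsFrobeniusAction

namespace IsFrobeniusWith

variable {G : Type*} [Group G] {K H : Subgroup G}

theorem isFrobeniusAction [K.Normal] (hF : IsFrobeniusWith K H) :
    IsFrobeniusAction ((MulAut.conjNormal (H := K)).comp H.subtype) := by
  intro h hh k hk
  by_contra hk1
  exact hF.2.2.2.2.2 h h.2 (by simpa using hh) k k.2 (by simpa using hk1)
    (by simpa using congrArg Subtype.val hk)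

theorem mul_bijective (hF : IsFrobeniusWith K H) :
    Function.Bijective (fun x : K × H => (x.1 * x.2 : G)) := by
  obtain ⟨-, -, -, hdisj, hmul, -⟩ := hF
  refine ⟨?_, fun g => ?_⟩
  · exact Subgroup.mul_injective_of_disjoint (disjoint_iff.mpr hdisj)
  · obtain ⟨k, hk, h, hh, rfl⟩ := hmul g
    exact ⟨(⟨k, hk⟩, ⟨h, hh⟩), rfl⟩

theorem card_eq (hF : IsFrobeniusWith K H) : Nat.card G = Nat.card K * Nat.card H := by
  rw [← Nat.card_congr (Equiv.ofBijective _ hF.mul_bijective), Nat.card_prod]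

/-- Every element of a coset `K h` with `h ≠ 1` is conjugate to `h`. -/
theorem orderOf_mul [Finite G] (hF : IsFrobeniusWith K H) (k : K) {h : H} (hh : h ≠ 1) :
    orderOf (k * h : G) = orderOf h := by
  have := hF.2.2.1
  obtain ⟨c, hc⟩ := (hF.isFrobeniusAction h hh).commutatorMap_surjective k
  have e : (k * h : G) = c * h * (c : G)⁻¹ := by
    rw [← hc]
    simp [MonoidHom.commutatorMap, div_eq_mul_inv, mul_assoc]
  rw [e, ← MulAut.conj_apply, MulEquiv.orderOf_eq, Subgroup.orderOf_coe]

theorem orderCount_eq [Finite G] (hF : IsFrobeniusWith K H) {n : ℕ} (hn : n ≠ 1) :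
    orderCount G n = orderCount K n + Nat.card K * orderCount H n := by
  classical
  have e : {g : G // orderOf g = n} ≃
      {k : K // orderOf k = n} ⊕ K × {h : H // orderOf h = n} :=
    calc {g : G // orderOf g = n}
      _ ≃ {x : K × H // orderOf (x.1 * x.2 : G) = n} :=
        ((Equiv.ofBijective _ hF.mul_bijective).subtypeEquiv (fun _ => Iff.rfl)).symm
      _ ≃ {x : K × H // (orderOf x.1 = n ∧ x.2 = 1) ∨ orderOf x.2 = n} :=
        Equiv.subtypeEquivRight (fun x => by
          by_cases h : x.2 = 1
          · simp [h, hn.symm]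
          · simp [h, hF.orderOf_mul x.1 h])
      _ ≃ {x : K × H // orderOf x.1 = n ∧ x.2 = 1} ⊕ {x : K × H // orderOf x.2 = n} :=
        subtypeOrEquiv _ _ (by
          rw [Pi.disjoint_iff]
          rintro ⟨x, y⟩
          simp only [Prop.disjoint_iff]
          rintro ⟨⟨-, rfl⟩, h⟩
          exact hn (by simpa using h.symm))
      _ ≃ {k : K // orderOf k = n} ⊕ K × {h : H // orderOf h = n} := Equiv.sumCongr
        { toFun := fun x => ⟨x.1.1, x.2.1⟩
          invFun := fun k => ⟨(k.1, 1), k.2, rfl⟩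
          left_inv := fun ⟨⟨x, y⟩, h1, h2⟩ => by simp at h2; simp [h2]
          right_inv := fun _ => rfl }
        { toFun := fun x => (x.1.1, ⟨x.1.2, x.2⟩)
          invFun := fun k => ⟨(k.1, k.2.1), k.2.2⟩
          left_inv := fun _ => rfl
          right_inv := fun _ => rfl }
  rw [orderCount, Nat.card_congr e, Nat.card_sum, Nat.card_prod]
  rfl

end IsFrobeniusWith

theorem orderCount_ne_zero {G : Type*} [Group G] [Finite G] (g : G) :
    orderCount G (orderOf g) ≠ 0 :=
  have : Nonempty {x : G // orderOf x = orderOf g} := ⟨⟨g, rfl⟩⟩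
  Nat.card_pos.ne'

theorem orderCount_ne_zero_iff {G : Type*} [Group G] [Finite G] {n : ℕ} :
    orderCount G n ≠ 0 ↔ ∃ g : G, orderOf g = n := by
  refine ⟨fun h => ?_, ?_⟩
  · obtain ⟨⟨g, hg⟩⟩ := (Nat.card_ne_zero.mp h).1
    exact ⟨g, hg⟩
  · rintro ⟨g, rfl⟩
    exact orderCount_ne_zero g

theorem orderCount_congr {G G' : Type*} [Group G] [Group G'] (e : G ≃* G') (n : ℕ) :
    orderCount G n = orderCount G' n :=
  Nat.card_congr (e.toEquiv.subtypeEquiv (fun g => by simp))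

/-- The number of elements of prime power order as a difference of numbers of solutions. -/
theorem orderCount_prime_pow {G : Type*} [Group G] [Finite G] {p : ℕ} (hp : p.Prime) (j : ℕ) :
    orderCount G (p ^ (j + 1)) =
      Nat.card {x : G // x ^ p ^ (j + 1) = 1} - Nat.card {x : G // x ^ p ^ j = 1} := by
  have : Fact p.Prime := ⟨hp⟩
  have hsub : {x : G | x ^ p ^ j = 1} ⊆ {x : G | x ^ p ^ (j + 1) = 1} := by
    intro x (hx : x ^ p ^ j = 1)
    rw [Set.mem_ofPred_eq, pow_succ, pow_mul, hx, one_pow]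
  have h := Set.ncard_sdiff hsub (Set.toFinite _)
  rw [← Nat.card_coe_set_eq, ← Nat.card_coe_set_eq, ← Nat.card_coe_set_eq] at h
  refine Eq.trans (Nat.card_congr (Equiv.subtypeEquivRight fun x => ?_)) h
  simp only [Set.mem_sdiff, Set.mem_ofPred_eq]
  refine ⟨fun h => ⟨h ▸ pow_orderOf_eq_one x, fun h1 => ?_⟩,
    fun h => orderOf_eq_prime_pow h.2 h.1⟩
  have := Nat.le_of_dvd (pow_pos hp.pos _) (h ▸ orderOf_dvd_of_pow_eq_one h1)
  exact absurd this (not_le.mpr (Nat.pow_lt_pow_right hp.one_lt (Nat.lt_succ_self j)))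

theorem orderCount_mul_of_coprime {A : Type*} [CommGroup A] {m n : ℕ} (hmn : m.Coprime n)
    (hm : 0 < m) (hn : 0 < n) : orderCount A (m * n) = orderCount A m * orderCount A n := by
  rw [orderCount, orderCount, orderCount, ← Nat.card_prod]
  refine (Nat.card_congr (Equiv.ofBijective
    (fun z : {x : A // orderOf x = m} × {x : A // orderOf x = n} =>
      (⟨z.1 * z.2, by
        rw [(Commute.all _ _).orderOf_mul_eq_mul_orderOf_of_coprime
          (by rw [z.1.2, z.2.2]; exact hmn), z.1.2, z.2.2]⟩ : {x : A // orderOf x = m * n}))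
    ⟨?_, ?_⟩)).symm
  · rintro ⟨⟨x, hx⟩, ⟨y, hy⟩⟩ ⟨⟨x', hx'⟩, ⟨y', hy'⟩⟩ h
    have h : x * y = x' * y' := congrArg Subtype.val h
    have hxy : x / x' = y' / y := by
      rw [div_eq_div_iff_mul_eq_mul, h, mul_comm]
    have h1 : (x / x') ^ m = 1 := by
      rw [div_pow, ← hx, pow_orderOf_eq_one, hx, ← hx', pow_orderOf_eq_one, div_one]
    have h2 : (x / x') ^ n = 1 := by
      rw [hxy, div_pow, ← hy, pow_orderOf_eq_one, hy, ← hy', pow_orderOf_eq_one, div_one]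
    have h3 : x / x' = 1 := by
      rw [← orderOf_eq_one_iff]
      exact Nat.eq_one_of_dvd_coprimes hmn (orderOf_dvd_of_pow_eq_one h1)
        (orderOf_dvd_of_pow_eq_one h2)
    have h4 : x = x' := div_eq_one.mp h3
    have h5 : y' = y := div_eq_one.mp (hxy ▸ h3)
    subst h4 h5
    rfl
  · rintro ⟨z, hz⟩
    obtain ⟨c, hc1, hc2⟩ := Nat.chineseRemainder hmn 1 0
    obtain ⟨d, hd1, hd2⟩ := Nat.chineseRemainder hmn 0 1
    have hx : (z ^ c) ^ m = 1 := by
      obtain ⟨q, rfl⟩ := (Nat.modEq_zero_iff_dvd).mp hc2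
      rw [← pow_mul, mul_right_comm, mul_comm n m, pow_mul, ← hz, pow_orderOf_eq_one, one_pow]
    have hy : (z ^ d) ^ n = 1 := by
      obtain ⟨q, rfl⟩ := (Nat.modEq_zero_iff_dvd).mp hd1
      rw [← pow_mul, mul_right_comm, pow_mul, ← hz, pow_orderOf_eq_one, one_pow]
    have hxy : z ^ c * z ^ d = z := by
      rw [← pow_add]
      conv_rhs => rw [← pow_one z]
      rw [pow_eq_pow_iff_modEq, hz]
      refine (Nat.modEq_and_modEq_iff_modEq_mul hmn).mp ⟨?_, ?_⟩
      · simpa using hc1.add hd1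
      · simpa using hc2.add hd2
    have hdx := orderOf_dvd_of_pow_eq_one hx
    have hdy := orderOf_dvd_of_pow_eq_one hy
    have hmul : orderOf (z ^ c) * orderOf (z ^ d) = m * n := by
      rw [← (Commute.all _ _).orderOf_mul_eq_mul_orderOf_of_coprime
        (Nat.Coprime.of_dvd hdx hdy hmn), hxy, hz]
    have hlx := Nat.le_of_dvd hm hdx
    have hly := Nat.le_of_dvd hn hdy
    have ex : orderOf (z ^ c) = m := by
      refine le_antisymm hlx (not_lt.mp fun hlt => ?_)
      have := Nat.mul_lt_mul_of_lt_of_le hlt hly hn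
      omega
    have ey : orderOf (z ^ d) = n := by
      rw [ex] at hmul
      exact Nat.eq_of_mul_eq_mul_left hm hmul
    exact ⟨(⟨_, ex⟩, ⟨_, ey⟩), Subtype.ext hxy⟩

/-- The number of solutions of `x ^ d = 1` in a finite product of finite cyclic groups. -/
theorem card_pow_eq_one_pi_zmod {ι : Type*} [Fintype ι] (n : ι → ℕ) [∀ i, NeZero (n i)] (d : ℕ) :
    Nat.card {x : (i : ι) → Multiplicative (ZMod (n i)) // x ^ d = 1} =
      ∏ i, (n i).gcd d := by
  have e : {x : (i : ι) → Multiplicative (ZMod (n i)) // x ^ d = 1} ≃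
      ((i : ι) → (powMonoidHom d : Multiplicative (ZMod (n i)) →* _).ker) :=
    (Equiv.subtypeEquivRight fun x => funext_iff).trans
      (Equiv.subtypePiEquivPi (p := fun i (a : Multiplicative (ZMod (n i))) => a ^ d = 1))
  rw [Nat.card_congr e, Nat.card_pi]
  refine Finset.prod_congr rfl fun i _ => ?_
  rw [IsCyclic.card_powMonoidHom_ker]
  simp

namespace IsFrobeniusAction

variable {H A : Type*} [Group H] [CommGroup A] [Finite A] {φ : H →* MulAut A}

/-- If the order counts of the abelian kernel of a Frobenius action divide the order of the
Frobenius group, then the kernel is a `p`-group. -/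
theorem exists_card_eq_prime_pow [Nontrivial A] (hφ : IsFrobeniusAction φ) (hH : Nat.card H ≠ 1)
    (hH0 : Nat.card H ≠ 0)
    (hA : ∀ n, n ≠ 1 → orderCount A n ≠ 0 → orderCount A n ∣ Nat.card A * Nat.card H) :
    ∃ p m, p.Prime ∧ Nat.card A = p ^ m := by
  have hA1 : Nat.card A ≠ 1 := (Finite.one_lt_card (α := A)).ne'
  have hp := Nat.minFac_prime hA1
  set p := (Nat.card A).minFac
  refine ⟨p, _, hp, Nat.eq_prime_pow_of_unique_prime_dvd Nat.card_pos.ne' ?_⟩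
  intro q hq hqA
  by_contra hqp
  have : Fact p.Prime := ⟨hp⟩
  have : Fact q.Prime := ⟨hq⟩
  obtain ⟨x, hx⟩ := exists_prime_orderOf_dvd_card' p (Nat.minFac_dvd (Nat.card A))
  obtain ⟨y, hy⟩ := exists_prime_orderOf_dvd_card' q hqA
  have hcount := orderCount_mul_of_coprime (A := A) ((Nat.coprime_primes hp hq).mpr (Ne.symm hqp))
    hp.pos hq.pos
  have hdvd := hA (p * q) (fun h => hp.one_lt.ne' (Nat.eq_one_of_mul_eq_one_right h)) (by
    rw [hcount]
    exact mul_ne_zero (hx ▸ orderCount_ne_zero x) (hy ▸ orderCount_ne_zero y))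
  rw [hcount] at hdvd
  have h2 := (mul_dvd_mul (hφ.card_dvd_orderCount hp.one_lt.ne')
    (hφ.card_dvd_orderCount hq.one_lt.ne')).trans hdvd
  have h3 := Nat.dvd_of_mul_dvd_mul_right (Nat.pos_of_ne_zero hH0) h2
  exact hH (Nat.Coprime.eq_one_of_dvd hφ.coprime_card h3)

/-- An abelian `p`-group which is the kernel of a Frobenius action by a group whose order is one
less than the number of solutions of `x ^ p = 1` is homocyclic. -/
theorem exists_mulEquiv_homocyclic [Nontrivial A] (hφ : IsFrobeniusAction φ) {p m : ℕ}
    (hp : p.Prime) (hm : Nat.card A = p ^ m)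
    (hH : Nat.card {x : A // x ^ p = 1} ≤ Nat.card H + 1) :
    ∃ k r, 0 < k ∧ Nat.card {x : A // x ^ p = 1} = p ^ r ∧
      Nonempty (A ≃* (Fin r → Multiplicative (ZMod (p ^ k)))) := by
  classical
  obtain ⟨ι, _, n, hn, ⟨f⟩⟩ := CommGroup.equiv_prod_multiplicative_zmod_of_finite A
  have hNZ : ∀ i, NeZero (n i) := fun i => ⟨by have := hn i; omega⟩
  have hcardA : Nat.card A = ∏ i, n i := by
    rw [Nat.card_congr f.toEquiv, Nat.card_pi]
    simp
  have hexp : ∀ i, ∃ e, n i = p ^ (e + 1) := by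
    intro i
    have hdvd : n i ∣ p ^ m := by
      rw [← hm, hcardA]
      exact Finset.dvd_prod_of_mem n (Finset.mem_univ i)
    obtain ⟨e, -, he⟩ := (Nat.dvd_prime_pow hp).mp hdvd
    cases e with
    | zero => have := hn i; simp [he] at this
    | succ e => exact ⟨e, he⟩
  choose e he using hexp
  have hcard : Nat.card {x : A // x ^ p = 1} = p ^ Fintype.card ι := by
    have h1 : Nat.card {x : A // x ^ p = 1} =
        Nat.card {x : (i : ι) → Multiplicative (ZMod (n i)) // x ^ p = 1} :=
      Nat.card_congr (f.toEquiv.subtypeEquiv (fun x => by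
        change _ ↔ f x ^ p = 1
        rw [← map_pow, map_eq_one_iff f f.injective]))
    rw [h1, card_pow_eq_one_pi_zmod, Finset.prod_congr rfl (g := fun _ => p)]
    · simp
    · intro i _
      rw [he, pow_succ, mul_comm]
      simp
  have hι : Nonempty ι := by
    by_contra h
    rw [not_nonempty_iff] at h
    have := Finite.one_lt_card (α := A)
    rw [hcardA] at this
    simp at this
  obtain ⟨i₀, hi₀⟩ := Finite.exists_max e
  -- the element of order `p` in the `i`-th factor
  let v : (i : ι) → A := fun i => f.symm (Pi.mulSingle i (Multiplicative.ofAdd (p ^ e i : ZMod (n i))))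
  have hv : ∀ i, Multiplicative.ofAdd (p ^ e i : ZMod (n i)) ≠ 1 := by
    intro i h
    have h : ((p ^ e i : ℕ) : ZMod (n i)) = 0 := by simpa using h
    rw [ZMod.natCast_eq_zero_iff, he] at h
    exact absurd (Nat.le_of_dvd (pow_pos hp.pos _) h)
      (not_le.mpr (Nat.pow_lt_pow_right hp.one_lt (Nat.lt_succ_self _)))
  have hvp : ∀ i, v i ^ p = 1 := by
    intro i
    rw [← map_pow, ← Pi.mulSingle_pow, ← ofAdd_nsmul, nsmul_eq_mul]
    have : ((p : ZMod (n i)) * p ^ e i) = 0 := by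
      rw [← pow_succ', ← Nat.cast_pow, ← he]
      simp
    rw [this]
    simp
  let V : Subgroup A := (powMonoidHom p).ker
  let E : Subgroup A := (powMonoidHom (p ^ e i₀)).range
  have hEV : E ≤ V := by
    rintro _ ⟨x, rfl⟩
    rw [MonoidHom.mem_ker]
    change (x ^ p ^ e i₀) ^ p = 1
    rw [← pow_mul, ← pow_succ, ← map_eq_one_iff f f.injective, map_pow]
    funext i
    rw [Pi.pow_apply, Pi.one_apply]
    have hd : n i ∣ p ^ (e i₀ + 1) := by
      rw [he]
      exact pow_dvd_pow p (Nat.succ_le_succ (hi₀ i))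
    obtain ⟨q, hq⟩ := hd
    rw [hq, pow_mul]
    have : f x i ^ n i = 1 := by
      have := pow_card_eq_one' (x := f x i)
      simpa using this
    rw [this, one_pow]
  have hE1 : E ≠ ⊥ := by
    intro h
    have hmem : v i₀ ∈ E := by
      refine ⟨f.symm (Pi.mulSingle i₀ (Multiplicative.ofAdd 1)), ?_⟩
      rw [powMonoidHom_apply, ← map_pow, ← Pi.mulSingle_pow, ← ofAdd_nsmul, nsmul_eq_mul]
      simp [v]
    rw [h, Subgroup.mem_bot, map_eq_one_iff f.symm f.symm.injective] at hmem
    exact hv i₀ (by simpa using hmem)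
  have hEcard : Nat.card V ≤ Nat.card E := by
    have h1 := hφ.card_dvd_card_subgroup_sub_one E (by
      rintro h _ ⟨x, rfl⟩
      exact ⟨φ h x, by simp⟩)
    have h2 : 1 < Nat.card E := by
      rw [Subgroup.one_lt_card_iff_ne_bot]
      exact hE1
    have h3 := Nat.le_of_dvd (by omega) h1
    have h4 : Nat.card V = Nat.card {x : A // x ^ p = 1} := rfl
    omega
  have hEq : E = V := Subgroup.eq_of_le_of_card_ge hEV hEcard
  have hconst : ∀ i, e i = e i₀ := by
    intro i
    refine le_antisymm (hi₀ i) (not_lt.mp fun hlt => ?_)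
    have hmem : v i ∈ E := by
      rw [hEq]
      exact hvp i
    obtain ⟨y, hy⟩ := hmem
    have hy := congrArg (fun z => f z i) hy
    simp only [powMonoidHom_apply, map_pow, v, MulEquiv.apply_symm_apply, Pi.pow_apply,
      Pi.mulSingle_eq_same] at hy
    have : f y i ^ n i = 1 := by
      have := pow_card_eq_one' (x := f y i)
      simpa using this
    obtain ⟨q, hq⟩ : n i ∣ p ^ e i₀ := by
      rw [he]
      exact pow_dvd_pow p hlt
    rw [hq, pow_mul, this, one_pow] at hy
    exact hv i hy.symm
  obtain rfl : n = fun _ => p ^ (e i₀ + 1) := funext fun i => by rw [he, hconst]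
  exact ⟨e i₀ + 1, Fintype.card ι, Nat.succ_pos _, hcard,
    ⟨f.trans (MulEquiv.arrowCongr (Fintype.equivFin ι) (MulEquiv.refl _))⟩⟩

/-- If the order counts of the abelian kernel of a Frobenius action divide the order of the
Frobenius group, then the kernel is homocyclic and the complement acts regularly on the elements
of prime order. -/
theorem exists_homocyclic_of_orderCount_dvd [Nontrivial A] (hφ : IsFrobeniusAction φ)
    (hH : Nat.card H ≠ 1) (hH0 : Nat.card H ≠ 0)
    (hA : ∀ n, n ≠ 1 → orderCount A n ≠ 0 → orderCount A n ∣ Nat.card A * Nat.card H) :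
    ∃ p k r, p.Prime ∧ 0 < k ∧ Nat.card H + 1 = p ^ r ∧
      Nat.card {x : A // x ^ p = 1} = p ^ r ∧
      Nonempty (A ≃* (Fin r → Multiplicative (ZMod (p ^ k)))) := by
  obtain ⟨p, m, hp, hm⟩ := hφ.exists_card_eq_prime_pow hH hH0 hA
  have : Fact p.Prime := ⟨hp⟩
  have hcount : orderCount A p + 1 = Nat.card {x : A // x ^ p = 1} := by
    have h := orderCount_prime_pow (G := A) hp 0
    have h1 : Nat.card {x : A // x ^ p ^ 0 = 1} = 1 := by simp
    have h2 : 0 < Nat.card {x : A // x ^ p = 1} :=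
      have : Nonempty {x : A // x ^ p = 1} := ⟨⟨1, one_pow p⟩⟩
      Nat.card_pos
    rw [h1, zero_add, pow_one] at h
    omega
  have hpA : p ∣ Nat.card A := by
    rw [hm]
    refine dvd_pow_self p ?_
    rintro rfl
    exact (Finite.one_lt_card (α := A)).ne' (by simpa using hm)
  obtain ⟨x, hx⟩ := exists_prime_orderOf_dvd_card' p hpA
  have h0 : orderCount A p ≠ 0 := hx ▸ orderCount_ne_zero x
  have hd := hA p hp.one_lt.ne' h0
  have hdH := hφ.card_dvd_orderCount (n := p) hp.one_lt.ne'
  have hpc : p ∣ Nat.card {x : A // x ^ p = 1} := by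
    change p ∣ Nat.card (powMonoidHom p : A →* A).ker
    have hxm : x ∈ (powMonoidHom p : A →* A).ker := hx ▸ pow_orderOf_eq_one x
    have h := orderOf_dvd_natCard (⟨x, hxm⟩ : (powMonoidHom p : A →* A).ker)
    rwa [Subgroup.orderOf_mk, hx] at h
  have hcop : (orderCount A p).Coprime (Nat.card A) := by
    rw [hm]
    refine Nat.Coprime.pow_right m (Nat.Coprime.symm ((Nat.Prime.coprime_iff_not_dvd hp).mpr ?_))
    intro h
    rw [← hcount] at hpc
    exact hp.one_lt.ne' (Nat.dvd_one.mp ((Nat.dvd_add_right h).mp hpc))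
  have heq : orderCount A p = Nat.card H := Nat.dvd_antisymm (hcop.dvd_of_dvd_mul_left hd) hdH
  obtain ⟨k, r, hk, hr, hiso⟩ := hφ.exists_mulEquiv_homocyclic hp hm (by omega)
  exact ⟨p, k, r, hp, hk, by omega, hr, hiso⟩

end IsFrobeniusAction

theorem eq_two_of_five_pow_eq {i j : ℕ} (h : 5 ^ j = 2 ^ i + 1) : i = 2 := by
  have h3 : i < 3 := by
    by_contra hi
    obtain ⟨c, rfl⟩ := Nat.exists_eq_add_of_le (not_lt.mp hi)
    have h8 : 5 ^ j % 8 = 1 := by rw [h, pow_add]; omega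
    have hj : j % 2 = 0 := by
      by_contra hj
      obtain ⟨l, rfl⟩ : Odd j := Nat.odd_iff.mpr (by omega)
      rw [pow_succ, pow_mul, Nat.mul_mod, Nat.pow_mod] at h8
      norm_num at h8
    obtain ⟨l, rfl⟩ : 2 ∣ j := Nat.dvd_of_mod_eq_zero hj
    have h5 : 5 ^ (2 * l) % 3 = 1 := by rw [pow_mul, Nat.pow_mod]; norm_num
    have hd : 3 ∣ 2 ^ (3 + c) := by omega
    exact absurd (Nat.Prime.dvd_of_dvd_pow Nat.prime_three hd) (by norm_num)
  interval_cases i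
  · rcases j with _ | j
    · omega
    · rw [pow_succ] at h; omega
  · rcases j with _ | j
    · omega
    · rw [pow_succ] at h; omega
  · rfl

theorem eq_nine_of_sq_eq {q a b : ℕ} (ha : a ≠ 0) (hb : b ≠ 0) (h : q ^ 2 = 2 ^ a * 5 ^ b + 1) :
    q = 9 := by
  have hq : q % 2 = 1 := by
    by_contra hq
    obtain ⟨t, rfl⟩ : 2 ∣ q := by omega
    have : 2 ∣ 2 ^ a * 5 ^ b := Dvd.dvd.mul_right (dvd_pow_self 2 ha) _
    have h2 : (2 * t) ^ 2 = 2 * (2 * t ^ 2) := by ring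
    omega
  obtain ⟨s, rfl⟩ : ∃ s, q = 2 * s + 1 := ⟨q / 2, by omega⟩
  have hs : 2 ^ 2 * (s * (s + 1)) = 2 ^ a * 5 ^ b := by
    have : (2 * s + 1) ^ 2 = 2 ^ 2 * (s * (s + 1)) + 1 := by ring
    omega
  have hs0 : s ≠ 0 := by rintro rfl; simp at hs
  have h5 : 5 ∣ s * (s + 1) := by
    have : 5 ∣ 2 ^ 2 * (s * (s + 1)) := hs ▸ Dvd.dvd.mul_left (dvd_pow_self 5 hb) _
    exact (Nat.Coprime.dvd_mul_left (by norm_num : Nat.Coprime 5 (2 ^ 2))).mp this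
  have key : ∀ d, d ∣ s * (s + 1) → d ∣ 2 ^ a * 5 ^ b := fun d hd =>
    hs ▸ Dvd.dvd.mul_left hd _
  have odd_part : ∀ d, d ∣ s * (s + 1) → d % 2 = 1 → ∃ j, d = 5 ^ j := fun d hd hd2 => by
    have hc : Nat.Coprime d (2 ^ a) :=
      Nat.Coprime.pow_right a (Nat.coprime_two_right.mpr (Nat.odd_iff.mpr hd2))
    obtain ⟨j, -, hj⟩ := (Nat.dvd_prime_pow Nat.prime_five).mp (hc.dvd_of_dvd_mul_left (key d hd))
    exact ⟨j, hj⟩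
  have two_part : ∀ d, d ∣ s * (s + 1) → ¬ 5 ∣ d → ∃ i, d = 2 ^ i := fun d hd hd5 => by
    have hc : Nat.Coprime d (5 ^ b) :=
      Nat.Coprime.pow_right b ((Nat.Prime.coprime_iff_not_dvd Nat.prime_five).mpr hd5).symm
    obtain ⟨j, -, hj⟩ := (Nat.dvd_prime_pow Nat.prime_two).mp (hc.dvd_of_dvd_mul_right (key d hd))
    exact ⟨j, hj⟩
  rcases Nat.even_or_odd s with hev | hodd
  · obtain ⟨j, hj⟩ := odd_part (s + 1) (dvd_mul_left _ _) (by
      have := Nat.even_iff.mp hev; omega)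
    have hj0 : j ≠ 0 := by rintro rfl; simp at hj; exact hs0 hj
    have hd : 5 ∣ s + 1 := hj ▸ dvd_pow_self 5 hj0
    obtain ⟨i, hi⟩ := two_part s (dvd_mul_right _ _) (by omega)
    have := eq_two_of_five_pow_eq (i := i) (j := j) (by omega)
    subst this
    omega
  · obtain ⟨j, hj⟩ := odd_part s (dvd_mul_right _ _) (Nat.odd_iff.mp hodd)
    have hj0 : j ≠ 0 := by
      rintro rfl
      rw [hj] at h5
      omega
    have hd : 5 ∣ s := hj ▸ dvd_pow_self 5 hj0
    obtain ⟨i, hi⟩ := two_part (s + 1) (dvd_mul_left _ _) (by omega)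
    have h4 : 5 ^ j % 4 = 1 := by rw [Nat.pow_mod]; norm_num
    have hi2 : i < 2 := by
      by_contra hi2
      obtain ⟨c, rfl⟩ := Nat.exists_eq_add_of_le (not_lt.mp hi2)
      rw [pow_add] at hi
      omega
    interval_cases i <;> omega

theorem not_odd_of_pow_eq {p r a b : ℕ} (ha : a ≠ 0) (hp : 1 < p) (hr : 1 < r)
    (h : p ^ r = 2 ^ a * 5 ^ b + 1) : ¬ Odd r := by
  intro hodd
  have h2 : 2 ∣ 2 ^ a * 5 ^ b := Dvd.dvd.mul_right (dvd_pow_self 2 ha) _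
  have hpodd : Odd p := by
    have : Odd (p ^ r) := Nat.odd_iff.mpr (by omega)
    exact (Nat.odd_pow_iff (by omega)).mp this
  obtain ⟨x, rfl⟩ : ∃ x, p = x + 1 := ⟨p - 1, by omega⟩
  set S := ∑ i ∈ Finset.range r, (x + 1) ^ i with hS
  have hSx : S * x = 2 ^ a * 5 ^ b := by
    have := geom_sum_mul_add x r
    rw [← hS, h] at this
    exact Nat.succ_injective this
  have hSodd : Odd S := by
    rw [hS, Finset.odd_sum_iff_odd_card_odd, Finset.filter_true_of_mem (fun i _ => hpodd.pow)]
    simpa using hodd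
  have hSr : r < S := by
    have : ∑ i ∈ Finset.range r, 1 < S :=
      Finset.sum_lt_sum (fun i _ => Nat.one_le_pow _ _ (by omega))
        ⟨1, Finset.mem_range.mpr hr, by rw [pow_one]; omega⟩
    simpa using this
  obtain ⟨j, -, hj⟩ := (Nat.dvd_prime_pow Nat.prime_five).mp
    ((Nat.Coprime.pow_right a (Nat.coprime_two_right.mpr hSodd)).dvd_of_dvd_mul_left
      (Dvd.intro x hSx))
  have hj0 : j ≠ 0 := by rintro rfl; simp at hj; omega
  have h5 : (x + 1) ^ r % 5 = 1 := by
    have : 5 ∣ S * x := Dvd.dvd.mul_right (hj ▸ dvd_pow_self 5 hj0) x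
    rw [h, ← hSx]
    omega
  have hx5 : 5 ∣ x := by
    have hr4 : r = 4 * (r / 4) + r % 4 := by omega
    have hr2 : r % 4 = 1 ∨ r % 4 = 3 := by
      have := Nat.odd_iff.mp hodd
      omega
    have h0 : x % 5 < 5 := Nat.mod_lt _ (by norm_num)
    rw [hr4, pow_add, pow_mul, Nat.mul_mod, Nat.pow_mod ((x + 1) ^ 4), Nat.pow_mod (x + 1) 4,
      Nat.pow_mod (x + 1) (r % 4), Nat.add_mod] at h5
    rcases hr2 with hr2 | hr2 <;> rw [hr2] at h5 <;> generalize hy : x % 5 = y at h0 h5 <;>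
      interval_cases y <;> first | exact Nat.dvd_of_mod_eq_zero hy | norm_num at h5
  have : Fact (Nat.Prime 5) := ⟨Nat.prime_five⟩
  have hx0 : x ≠ 0 := by omega
  have hlte := padicValNat.pow_sub_pow (p := 5) (x := x + 1) (y := 1) (by decide) (by omega)
    (by simpa using hx5) (by omega) (n := r) (by omega)
  have e1 : (x + 1) ^ r - 1 ^ r = S * x := by rw [one_pow, h, hSx, Nat.add_sub_cancel]
  rw [e1, Nat.add_sub_cancel, padicValNat.mul (by omega) hx0] at hlte
  have hv : padicValNat 5 S = padicValNat 5 r := by omega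
  have hSd : 5 ^ j ∣ r := by
    rw [padicValNat_dvd_iff_le (by omega), ← hv, hj, padicValNat.prime_pow]
  have := Nat.le_of_dvd (by omega) hSd
  omega

/-- The only proper prime power that exceeds by one a number whose prime divisors are `2` and `5`,
both occurring, is `81 = 3 ^ 4`. -/
theorem eq_three_and_four_of_prime_pow_eq {p r n : ℕ} (hp : p.Prime) (hr : 1 < r)
    (h2 : 2 ∣ n) (h5 : 5 ∣ n) (hn0 : n ≠ 0) (hn : ∀ q : ℕ, q.Prime → q ∣ n → q = 2 ∨ q = 5)
    (h : n + 1 = p ^ r) : p = 3 ∧ r = 4 := by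
  obtain ⟨a, m, hm, rfl⟩ := Nat.exists_eq_two_pow_mul_odd hn0
  have hm5 : m = 5 ^ m.primeFactorsList.length := by
    refine Nat.eq_prime_pow_of_unique_prime_dvd hm.pos.ne' fun {d} hd hdm => ?_
    refine (hn d hd (Dvd.dvd.mul_left hdm _)).resolve_left ?_
    rintro rfl
    exact Nat.not_even_iff_odd.mpr hm (even_iff_two_dvd.mpr hdm)
  set b := m.primeFactorsList.length
  rw [hm5] at h h2 h5
  have ha : a ≠ 0 := by
    rintro rfl
    have : Odd (5 ^ b) := Odd.pow (by decide)
    rw [pow_zero, one_mul] at h2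
    exact Nat.not_even_iff_odd.mpr this (even_iff_two_dvd.mpr h2)
  have hb : b ≠ 0 := by
    intro hb
    rw [hb, pow_zero, mul_one] at h5
    exact absurd (Nat.Prime.dvd_of_dvd_pow Nat.prime_five h5) (by norm_num)
  obtain ⟨t, rfl⟩ := (Nat.not_odd_iff_even.mp (not_odd_of_pow_eq ha hp.one_lt hr h.symm)).two_dvd
  have h9 := eq_nine_of_sq_eq (q := p ^ t) ha hb (by rw [← pow_mul, mul_comm t 2, h])
  have hp3 : p = 3 := by
    have ht : t ≠ 0 := by omega
    have : p ∣ 3 ^ 2 := (dvd_pow_self p ht).trans (dvd_of_eq h9)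
    exact (Nat.prime_dvd_prime_iff_eq hp Nat.prime_three).mp (hp.dvd_of_dvd_pow this)
  subst hp3
  have : t = 2 :=
    Nat.pow_right_injective (by norm_num : 2 ≤ 3) (h9.trans (by norm_num : 9 = 3 ^ 2))
  omega

namespace Metacyclic

theorem exists_eq_pow_mul_pow (x : Metacyclic 5 16 4) :
    ∃ i j : ℕ, x = PresentedGroup.of true ^ i * PresentedGroup.of false ^ j := by
  set a : Metacyclic 5 16 4 := PresentedGroup.of true with ha
  set b : Metacyclic 5 16 4 := PresentedGroup.of false with hb
  have ha5 : a ^ 5 = 1 := PresentedGroup.one_of_mem (x := FreeGroup.of true ^ 5)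
    (by simp [metacyclicRels])
  have hb16 : b ^ 16 = 1 := PresentedGroup.one_of_mem (x := FreeGroup.of false ^ 16)
    (by simp [metacyclicRels])
  have hab : b⁻¹ * a * b = a ^ 4 := by
    have := PresentedGroup.one_of_mem (rels := metacyclicRels 5 16 4) (x := (FreeGroup.of false)⁻¹ *
      FreeGroup.of true * FreeGroup.of false * (FreeGroup.of true ^ (4 : ℤ))⁻¹)
      (by simp [metacyclicRels])
    exact mul_inv_eq_one.mp this
  have hba : b * a = a ^ 4 * b := by
    have h16 : b⁻¹ * a ^ 4 * b = a := by
      have h := conj_pow (i := 4) (a := b⁻¹) (b := a)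
      rw [inv_inv, hab, ← pow_mul] at h
      rw [← h, show 4 * 4 = 5 * 3 + 1 from rfl, pow_succ, pow_mul, ha5, one_pow, one_mul]
    calc b * a = b * (b⁻¹ * a ^ 4 * b) := by rw [h16]
      _ = a ^ 4 * b := by group
  have hbai : ∀ i : ℕ, b * a ^ i = a ^ (4 * i) * b := by
    intro i
    induction i with
    | zero => simp
    | succ i ih => rw [pow_succ, ← mul_assoc, ih, mul_assoc, hba, ← mul_assoc, ← pow_add, mul_add,
        mul_one]
  have hai : a⁻¹ = a ^ 4 := inv_eq_of_mul_eq_one_right (by rw [← pow_succ', ha5])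
  have hbi : b⁻¹ = b ^ 15 := inv_eq_of_mul_eq_one_right (by rw [← pow_succ', hb16])
  have step_a : ∀ y : Metacyclic 5 16 4, (∃ i j : ℕ, y = a ^ i * b ^ j) →
      ∃ i j : ℕ, a * y = a ^ i * b ^ j := by
    rintro _ ⟨i, j, rfl⟩
    exact ⟨i + 1, j, by rw [pow_succ', mul_assoc]⟩
  have step_b : ∀ y : Metacyclic 5 16 4, (∃ i j : ℕ, y = a ^ i * b ^ j) →
      ∃ i j : ℕ, b * y = a ^ i * b ^ j := by
    rintro _ ⟨i, j, rfl⟩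
    exact ⟨4 * i, j + 1, by rw [← mul_assoc, hbai, mul_assoc, ← pow_succ']⟩
  have iter : ∀ c : Metacyclic 5 16 4,
      (∀ y, (∃ i j : ℕ, y = a ^ i * b ^ j) → ∃ i j : ℕ, c * y = a ^ i * b ^ j) →
      ∀ (n : ℕ) y, (∃ i j : ℕ, y = a ^ i * b ^ j) → ∃ i j : ℕ, c ^ n * y = a ^ i * b ^ j := by
    intro c hc n
    induction n with
    | zero => intro y hy; simpa using hy
    | succ n ih => intro y hy; rw [pow_succ, mul_assoc]; exact ih _ (hc y hy)
  have hx : x ∈ Subgroup.closure (Set.range (PresentedGroup.of (rels := metacyclicRels 5 16 4))) := by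
    rw [PresentedGroup.closure_range_of]
    trivial
  induction hx using Subgroup.closure_induction_left with
  | one => exact ⟨0, 0, by simp⟩
  | mul_left c hc y hy ih =>
    obtain ⟨_ | _, rfl⟩ := hc
    · exact step_b y ih
    · exact step_a y ih
  | inv_mul_cancel c hc y hy ih =>
    obtain ⟨_ | _, rfl⟩ := hc
    · rw [← hb, hbi]; exact iter b step_b 15 y ih
    · rw [← ha, hai]; exact iter a step_a 4 y ih

theorem surjective_pow_mul_pow : Function.Surjective (fun x : Fin 5 × Fin 16 =>
    (PresentedGroup.of true ^ (x.1 : ℕ) * PresentedGroup.of false ^ (x.2 : ℕ) :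
      Metacyclic 5 16 4)) := by
  intro x
  obtain ⟨i, j, rfl⟩ := exists_eq_pow_mul_pow x
  have ha5 : (PresentedGroup.of true : Metacyclic 5 16 4) ^ 5 = 1 :=
    PresentedGroup.one_of_mem (x := FreeGroup.of true ^ 5) (by simp [metacyclicRels])
  have hb16 : (PresentedGroup.of false : Metacyclic 5 16 4) ^ 16 = 1 :=
    PresentedGroup.one_of_mem (x := FreeGroup.of false ^ 16) (by simp [metacyclicRels])
  refine ⟨(⟨i % 5, Nat.mod_lt _ (by norm_num)⟩, ⟨j % 16, Nat.mod_lt _ (by norm_num)⟩), ?_⟩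
  simp only
  rw [← pow_eq_pow_mod i ha5, ← pow_eq_pow_mod j hb16]

instance : Finite (Metacyclic 5 16 4) := Finite.of_surjective _ surjective_pow_mul_pow

theorem card_le : Nat.card (Metacyclic 5 16 4) ≤ 80 := by
  have := Nat.card_le_card_of_surjective _ surjective_pow_mul_pow
  simpa using this

/-- A group of order `80` generated by elements of orders `5` and `16` satisfying the metacyclic
relation is isomorphic to the metacyclic group. -/
theorem nonempty_mulEquiv {H : Type*} [Group H] (hH : Nat.card H = 80) {a b : H}
    (ha : orderOf a = 5) (hb : orderOf b = 16) (hab : b⁻¹ * a * b = a ^ 4) :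
    Nonempty (H ≃* Metacyclic 5 16 4) := by
  have : Finite H := Nat.finite_of_card_ne_zero (by omega)
  let f : Bool → H := fun t => bif t then a else b
  have hrel : ∀ r ∈ metacyclicRels 5 16 4, FreeGroup.lift f r = 1 := by
    rintro r (rfl | rfl | rfl)
    · simp [f, ← ha, pow_orderOf_eq_one]
    · simp [f, ← hb, pow_orderOf_eq_one]
    · simp only [map_mul, map_inv, map_zpow, FreeGroup.lift_apply_of, f, cond_true, cond_false, hab]
      exact mul_inv_eq_one.mpr (zpow_ofNat a 4).symm
  let F : Metacyclic 5 16 4 →* H := PresentedGroup.toGroup hrel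
  have hFa : F (PresentedGroup.of true) = a := PresentedGroup.toGroup.of hrel
  have hFb : F (PresentedGroup.of false) = b := PresentedGroup.toGroup.of hrel
  have hrange : F.range = ⊤ := by
    refine Subgroup.eq_top_of_le_card _ ?_
    have h5 : 5 ∣ Nat.card F.range := by
      have := Subgroup.orderOf_dvd_natCard F.range ⟨_, hFa⟩
      rwa [ha] at this
    have h16 : 16 ∣ Nat.card F.range := by
      have := Subgroup.orderOf_dvd_natCard F.range ⟨_, hFb⟩
      rwa [hb] at this
    have hd := Nat.Coprime.mul_dvd_of_dvd_of_dvd (by norm_num : Nat.Coprime 5 16) h5 h16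
    rw [hH]
    exact Nat.le_of_dvd Nat.card_pos hd
  have hsurj : Function.Surjective F := MonoidHom.range_eq_top.mp hrange
  have hcard := Nat.card_le_card_of_surjective F hsurj
  have hle := card_le
  exact ⟨(MulEquiv.ofBijective F
    ((Nat.bijective_iff_surjective_and_card F).mpr ⟨hsurj, by omega⟩)).symm⟩

end Metacyclic

/-- A concrete model of the metacyclic group of order `80`, with underlying set
`ZMod 5 × ZMod 16`. -/
@[ext]
structure MetacyclicModel where
  /-- the coordinate in the normal subgroup of order `5` -/
  fst : ZMod 5
  /-- the coordinate in the complement of order `16` -/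
  snd : ZMod 16

namespace MetacyclicModel

instance : DecidableEq MetacyclicModel := fun x y =>
  decidable_of_iff (x.fst = y.fst ∧ x.snd = y.snd) MetacyclicModel.ext_iff.symm

/-- The underlying set of the model. -/
def equivProd : MetacyclicModel ≃ ZMod 5 × ZMod 16 where
  toFun x := (x.fst, x.snd)
  invFun x := ⟨x.1, x.2⟩
  left_inv _ := rfl
  right_inv _ := rfl

instance : Fintype MetacyclicModel := Fintype.ofEquiv _ equivProd.symm

/-- The sign by which `ZMod 16` acts on `ZMod 5`. -/
def sign (i : ZMod 16) : ZMod 5 := if i.val % 2 = 0 then 1 else -1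

theorem sign_add : ∀ i j : ZMod 16, sign (i + j) = sign i * sign j := by decide

instance : Mul MetacyclicModel := ⟨fun x y => ⟨x.fst + sign x.snd * y.fst, x.snd + y.snd⟩⟩

instance : One MetacyclicModel := ⟨⟨0, 0⟩⟩

instance : Inv MetacyclicModel := ⟨fun x => ⟨-(sign x.snd * x.fst), -x.snd⟩⟩

theorem mul_def (x y : MetacyclicModel) :
    x * y = ⟨x.fst + sign x.snd * y.fst, x.snd + y.snd⟩ := rfl

instance : Group MetacyclicModel :=
  Group.ofLeftAxioms
    (fun x y z => by
      simp only [mul_def, sign_add]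
      ext
      · simp only; ring
      · simp only; ring)
    (fun x => by
      change (⟨0 + sign 0 * x.fst, 0 + x.snd⟩ : MetacyclicModel) = x
      ext <;> simp [sign])
    (fun x => by
      change (⟨-(sign x.snd * x.fst) + sign (-x.snd) * x.fst, -x.snd + x.snd⟩ : MetacyclicModel) =
        ⟨0, 0⟩
      have h : sign (-x.snd) = sign x.snd := by
        generalize x.snd = i
        revert i
        decide
      ext <;> simp [h])

theorem card_eq : Nat.card MetacyclicModel = 80 := by
  rw [Nat.card_congr equivProd]
  simp

/-- The order of an element of the model. -/
def ord (x : MetacyclicModel) : ℕ :=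
  if x.snd.val % 2 = 0 then 16 / Nat.gcd 16 x.snd.val * (if x.fst = 0 then 1 else 5) else 16

theorem orderOf_eq_ord (x : MetacyclicModel) : orderOf x = ord x := by
  have key : ∀ (u : ZMod 5) (i : ZMod 16), let x : MetacyclicModel := ⟨u, i⟩
      ord x ∣ 80 ∧ x ^ ord x = 1 ∧ (2 ∣ ord x → x ^ (ord x / 2) ≠ 1) ∧
        (5 ∣ ord x → x ^ (ord x / 5) ≠ 1) := by
    decide +kernel
  obtain ⟨h80, h1, h2, h5⟩ := key x.fst x.snd
  refine orderOf_eq_of_pow_and_pow_div_prime (Nat.pos_of_dvd_of_pos h80 (by norm_num)) h1 ?_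
  intro p hp hpx
  have hp80 : p ∣ 2 ^ 4 * 5 := hpx.trans h80
  rcases (Nat.Prime.dvd_mul hp).mp hp80 with h | h
  · obtain rfl := (Nat.prime_dvd_prime_iff_eq hp Nat.prime_two).mp (hp.dvd_of_dvd_pow h)
    exact h2 hpx
  · obtain rfl := (Nat.prime_dvd_prime_iff_eq hp Nat.prime_five).mp h
    exact h5 hpx

theorem perfectOrderClasses : PerfectOrderClasses MetacyclicModel := by
  intro n _
  by_cases hn : orderCount MetacyclicModel n = 0
  · exact Or.inl hn
  right
  obtain ⟨g, rfl⟩ := orderCount_ne_zero_iff.mp hn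
  have key : ∀ g : MetacyclicModel, Fintype.card {x : MetacyclicModel // ord x = ord g} ∣ 80 := by
    decide +kernel
  rw [card_eq, orderCount, Nat.card_congr (Equiv.subtypeEquivRight fun x => by
    rw [orderOf_eq_ord, orderOf_eq_ord]), Nat.card_eq_fintype_card]
  exact key g

theorem nonempty_mulEquiv : Nonempty (MetacyclicModel ≃* Metacyclic 5 16 4) :=
  Metacyclic.nonempty_mulEquiv card_eq (a := ⟨1, 0⟩) (b := ⟨0, 1⟩)
    (by rw [orderOf_eq_ord]; decide) (by rw [orderOf_eq_ord]; decide) (by decide)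

end MetacyclicModel

theorem Metacyclic.card_eq : Nat.card (Metacyclic 5 16 4) = 80 := by
  obtain ⟨e⟩ := MetacyclicModel.nonempty_mulEquiv
  rw [← Nat.card_congr e.toEquiv, MetacyclicModel.card_eq]

theorem Metacyclic.perfectOrderClasses : PerfectOrderClasses (Metacyclic 5 16 4) := by
  obtain ⟨e⟩ := MetacyclicModel.nonempty_mulEquiv
  intro n hn
  rw [← orderCount_congr e, ← Nat.card_congr e.toEquiv]
  exact MetacyclicModel.perfectOrderClasses n hn

theorem conj_pow_eq_pow_pow {H : Type*} [Group H] {a b : H} {m : ℕ} (h : b * a * b⁻¹ = a ^ m)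
    (n : ℕ) : b ^ n * a * (b ^ n)⁻¹ = a ^ m ^ n := by
  induction n with
  | zero => simp
  | succ n ih =>
    calc b ^ (n + 1) * a * (b ^ (n + 1))⁻¹ = b * (b ^ n * a * (b ^ n)⁻¹) * b⁻¹ := by
          rw [pow_succ']; group
      _ = a ^ m ^ (n + 1) := by rw [ih, ← conj_pow, h, ← pow_mul, pow_succ']

section GroupOfOrderEighty

variable {H : Type*} [Group H] {a : H}

theorem exists_conj_eq_pow_three_pow (ha : orderOf a = 5) (hN : (Subgroup.zpowers a).Normal)
    (b : H) : ∃ j < 4, b * a * b⁻¹ = a ^ 3 ^ j := by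
  have hfin : IsOfFinOrder a := orderOf_pos_iff.mp (by omega)
  have hmem := hN.conj_mem a (Subgroup.mem_zpowers a) b
  rw [← hfin.mem_powers_iff_mem_zpowers] at hmem
  obtain ⟨m, hm⟩ := hmem
  have hm : a ^ m = b * a * b⁻¹ := hm
  have ha1 : a ≠ 1 := by rintro rfl; simp at ha
  have hm5 : m % 5 ≠ 0 := by
    intro h
    have : a ^ m = 1 := orderOf_dvd_iff_pow_eq_one.mp (by rw [ha]; omega)
    rw [this] at hm
    exact ha1 (by simpa using hm.symm)
  have hlt : m % 5 < 5 := Nat.mod_lt _ (by norm_num)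
  have key : ∃ j < 4, m % 5 = 3 ^ j % 5 := by
    generalize m % 5 = x at *
    interval_cases x
    · exact absurd rfl hm5
    · exact ⟨0, by norm_num⟩
    · exact ⟨3, by norm_num⟩
    · exact ⟨1, by norm_num⟩
    · exact ⟨2, by norm_num⟩
  obtain ⟨j, hj, hmj⟩ := key
  exact ⟨j, hj, by rw [← hm, pow_eq_pow_iff_modEq, ha]; exact hmj⟩

theorem pow_ne_self_of_orderOf_eq_five (ha : orderOf a = 5) {n : ℕ} (hn : n % 5 ≠ 1) :
    a ^ n ≠ a := by
  intro h
  have h' : a ^ n = a ^ 1 := by rw [h, pow_one]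
  rw [pow_eq_pow_iff_modEq, ha] at h'
  exact hn h'

theorem pow_eq_self_of_orderOf_eq_five (ha : orderOf a = 5) {n : ℕ} (hn : n % 5 = 1) :
    a ^ n = a := by
  conv_rhs => rw [← pow_one a]
  rw [pow_eq_pow_iff_modEq, ha]
  exact hn

theorem four_dvd_card_centralizer [Finite H] (hH : Nat.card H = 80) (ha : orderOf a = 5)
    (hN : (Subgroup.zpowers a).Normal) : 4 ∣ Nat.card (Subgroup.centralizer {a}) := by
  have hker : (MulAut.conjNormal (H := Subgroup.zpowers a)).ker = Subgroup.centralizer {a} := by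
    ext h
    rw [MonoidHom.mem_ker, Subgroup.mem_centralizer_singleton_iff]
    constructor
    · intro hh
      have := congrArg Subtype.val (DFunLike.congr_fun hh ⟨a, Subgroup.mem_zpowers a⟩)
      simp only [MulAut.conjNormal_apply, MulAut.one_apply] at this
      exact mul_inv_eq_iff_eq_mul.mp this
    · intro hh
      ext ⟨x, n, rfl⟩
      simp only [MulAut.conjNormal_apply, MulAut.one_apply]
      rw [(Commute.zpow_right (show Commute h a from hh) n).eq, mul_inv_cancel_right]
  have hindex : (Subgroup.centralizer {a}).index ∣ 4 := by
    rw [← hker, Subgroup.index_ker]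
    have := Subgroup.card_subgroup_dvd_card (MulAut.conjNormal (H := Subgroup.zpowers a)).range
    rwa [IsCyclic.card_mulAut, Nat.card_zpowers, ha] at this
  have hmul := (Subgroup.centralizer {a}).card_mul_index
  obtain ⟨q, hq⟩ := hindex
  have : (Subgroup.centralizer {a}).index * (20 * q) =
      (Subgroup.centralizer {a}).index * Nat.card (Subgroup.centralizer {a}) := by
    rw [mul_comm _ (Nat.card _), hmul, hH, mul_left_comm, ← hq]
    norm_num
  have h0 : 0 < (Subgroup.centralizer {a}).index := by
    refine Nat.pos_of_ne_zero fun h => ?_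
    rw [h] at hq
    omega
  rw [← Nat.eq_of_mul_eq_mul_left h0 this]
  omega

/-- In a group of order `80` with a normal subgroup of order `5` on whose centralizer every
element acts like a power of the Frobenius map `c ↦ c ^ 3`, and with at most one involution, no
element induces an automorphism of order `4` on the subgroup of order `5`. -/
theorem conj_ne_pow_three [Finite H] (hH : Nat.card H = 80) (ha : orderOf a = 5)
    (hN : (Subgroup.zpowers a).Normal) (hcyc : IsCyclic (Subgroup.centralizer {a}))
    (hfrob : ∀ (b : H) (j : ℕ), b * a * b⁻¹ = a ^ 3 ^ j →
      ∀ c ∈ Subgroup.centralizer {a}, b * c * b⁻¹ = c ^ 3 ^ j)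
    (hinv : ∀ s t : H, s ≠ 1 → s ^ 2 = 1 → t ≠ 1 → t ^ 2 = 1 → s = t) (b : H) :
    b * a * b⁻¹ ≠ a ^ 3 := by
  intro hb
  set C := Subgroup.centralizer {a}
  have hb' : b * a * b⁻¹ = a ^ 3 ^ 1 := by simpa using hb
  have hb2 : b ^ 2 * a * (b ^ 2)⁻¹ = a ^ 3 ^ 2 := conj_pow_eq_pow_pow hb 2
  have hb2C : b ^ 2 ∉ C := by
    intro h
    rw [Subgroup.mem_centralizer_singleton_iff] at h
    rw [h, mul_inv_cancel_right] at hb2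
    exact pow_ne_self_of_orderOf_eq_five ha (by norm_num) hb2.symm
  have hb4C : b ^ 4 ∈ C := by
    rw [Subgroup.mem_centralizer_singleton_iff, ← mul_inv_eq_iff_eq_mul, conj_pow_eq_pow_pow hb 4]
    exact pow_eq_self_of_orderOf_eq_five ha (by norm_num)
  have hb8 : (b ^ 4) ^ 2 = 1 := by
    have h := hfrob b 1 hb' _ hb4C
    rw [(Commute.self_pow b 4).eq, mul_inv_cancel_right, pow_one, pow_succ (b ^ 4) 2] at h
    exact mul_eq_right.mp h.symm
  obtain ⟨c, hcC, hc⟩ : ∃ c ∈ C, orderOf c = 4 := by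
    obtain ⟨⟨g, hgC⟩, hg⟩ := hcyc.exists_ofOrder_eq_natCard
    obtain ⟨q, hq⟩ := four_dvd_card_centralizer hH ha hN
    rw [Subgroup.orderOf_mk, hq] at hg
    have hq0 : q ≠ 0 := by
      rintro rfl
      exact Nat.card_pos.ne' hq
    refine ⟨g ^ q, C.pow_mem hgC q, ?_⟩
    rw [orderOf_pow_of_dvd hq0 (hg ▸ dvd_mul_left q 4), hg, Nat.mul_div_cancel _
      (Nat.pos_of_ne_zero hq0)]
  have hc2 : c ^ 2 ≠ 1 := pow_ne_one_of_lt_orderOf (by norm_num) (by omega)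
  have hc4 : c ^ 4 = 1 := hc ▸ pow_orderOf_eq_one c
  have hc4' : (c ^ 2) ^ 2 = 1 := by rw [← pow_mul, hc4]
  have hcb : Commute (b ^ 2) c := by
    have h := hfrob _ 2 hb2 c hcC
    rw [show 3 ^ 2 = 4 * 2 + 1 from rfl, pow_succ c, pow_mul c, hc4, one_pow, one_mul] at h
    exact mul_inv_eq_iff_eq_mul.mp h
  by_cases h4 : b ^ 4 = 1
  · have h1 : b ^ 2 ≠ 1 := fun h => hb2C (h ▸ C.one_mem)
    have := hinv (b ^ 2) (c ^ 2) h1 (by rw [← pow_mul, h4]) hc2 hc4'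
    exact hb2C (this ▸ C.pow_mem hcC 2)
  · have e := hinv (b ^ 4) (c ^ 2) h4 hb8 hc2 hc4'
    have hsq : (b ^ 2 * c) ^ 2 = 1 := by
      rw [hcb.mul_pow, ← pow_mul, e, ← pow_add, hc4]
    by_cases h1 : b ^ 2 * c = 1
    · exact hb2C (eq_inv_of_mul_eq_one_left h1 ▸ C.inv_mem hcC)
    · have := hinv _ _ h1 hsq hc2 hc4'
      rw [sq c, mul_left_inj] at this
      exact hb2C (this ▸ hcC)

/-- Recognition of the metacyclic group of order `80` from the action on its normal subgroup of
order `5`. -/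
theorem nonempty_mulEquiv_metacyclic [Finite H] (hH : Nat.card H = 80) (ha : orderOf a = 5)
    (hN : (Subgroup.zpowers a).Normal) (hcyc : IsCyclic (Subgroup.centralizer {a}))
    (hfrob : ∀ (b : H) (j : ℕ), b * a * b⁻¹ = a ^ 3 ^ j →
      ∀ c ∈ Subgroup.centralizer {a}, b * c * b⁻¹ = c ^ 3 ^ j)
    (hinv : ∀ s t : H, s ≠ 1 → s ^ 2 = 1 → t ≠ 1 → t ^ 2 = 1 → s = t)
    (hcomm : ¬ ∀ x y : H, x * y = y * x) : Nonempty (H ≃* Metacyclic 5 16 4) := by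
  set C := Subgroup.centralizer {a} with hC
  have hmemC : ∀ x, x ∈ C ↔ x * a * x⁻¹ = a := fun x => by
    rw [hC, Subgroup.mem_centralizer_singleton_iff, mul_inv_eq_iff_eq_mul]
  have hno := conj_ne_pow_three hH ha hN hcyc hfrob hinv
  have hsplit : ∀ x, x ∉ C → x * a * x⁻¹ = a ^ 9 := by
    intro x hx
    obtain ⟨j, hj, h⟩ := exists_conj_eq_pow_three_pow ha hN x
    interval_cases j
    · exact absurd ((hmemC x).mpr (by simpa using h)) hx
    · exact absurd (by simpa using h) (hno x)
    · simpa using h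
    · refine absurd ?_ (hno (x ^ 3))
      rw [conj_pow_eq_pow_pow h 3, pow_eq_pow_iff_modEq, ha]
      decide
  obtain ⟨b, hb⟩ : ∃ b, b ∉ C := by
    by_contra! h
    refine hcomm fun x y => ?_
    let := hcyc.commGroup
    exact congrArg Subtype.val (mul_comm (⟨x, h x⟩ : C) ⟨y, h y⟩)
  have hindex : C.index = 2 := by
    rw [Subgroup.index_eq_two_iff]
    refine ⟨b, fun x => ?_⟩
    by_cases hx : x ∈ C
    · exact Or.inr ⟨hx, fun h => hb ((C.mul_mem_cancel_left hx).mp h)⟩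
    · refine Or.inl ⟨(hmemC _).mpr ?_, hx⟩
      calc x * b * a * (x * b)⁻¹ = x * (b * a * b⁻¹) * x⁻¹ := by group
        _ = a ^ (9 * 9) := by rw [hsplit b hb, ← conj_pow, hsplit x hx, ← pow_mul]
        _ = a := pow_eq_self_of_orderOf_eq_five ha (by norm_num)
  have hcardC : Nat.card C = 40 := by
    have := C.card_mul_index
    rw [hindex, hH] at this
    omega
  obtain ⟨⟨g, hgC⟩, hg⟩ := hcyc.exists_ofOrder_eq_natCard
  rw [Subgroup.orderOf_mk, hcardC] at hg
  have hg40 : g ^ 40 = 1 := hg ▸ pow_orderOf_eq_one g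
  have hCmem : ∀ x ∈ C, ∃ k : ℕ, g ^ k = x := by
    intro x hx
    have htop : (Subgroup.zpowers g) = C := by
      refine Subgroup.eq_of_le_of_card_ge (Subgroup.zpowers_le.mpr hgC) ?_
      rw [Nat.card_zpowers, hg, hcardC]
    rw [← htop, ← (isOfFinOrder_of_finite g).mem_powers_iff_mem_zpowers] at hx
    exact hx
  -- the `2`-part of an element outside the centralizer
  set d := b ^ 5 with hd
  have hdconj : d * a * d⁻¹ = a ^ 4 := by
    rw [hd, conj_pow_eq_pow_pow (hsplit b hb) 5, pow_eq_pow_iff_modEq, ha]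
    decide
  have hdC : d ∉ C := fun h =>
    pow_ne_self_of_orderOf_eq_five ha (by norm_num) (hdconj.symm.trans ((hmemC d).mp h))
  have hd16 : d ^ 16 = 1 := by
    rw [hd, ← pow_mul, show 5 * 16 = Nat.card H from hH.symm]
    exact pow_card_eq_one'
  have hd2C : d ^ 2 ∈ C := by
    rw [hmemC, conj_pow_eq_pow_pow hdconj 2]
    exact pow_eq_self_of_orderOf_eq_five ha (by norm_num)
  obtain ⟨k, hk⟩ := hCmem _ hd2C
  obtain ⟨i, rfl⟩ : 5 ∣ k := by
    have : g ^ (k * 8) = 1 := by rw [pow_mul, hk, ← pow_mul, hd16]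
    have := orderOf_dvd_of_pow_eq_one this
    rw [hg] at this
    omega
  have hdg : Commute d (g ^ 5) := by
    have h := hfrob d 2 (by simpa using hsplit d hdC) (g ^ 5) (C.pow_mem hgC 5)
    rw [← pow_mul g, show 5 * 3 ^ 2 = 40 + 5 from rfl, pow_add, hg40, one_mul] at h
    exact mul_inv_eq_iff_eq_mul.mp h
  have hg20 : g ^ 20 ≠ 1 := pow_ne_one_of_lt_orderOf (by norm_num) (by omega)
  have hiodd : Odd i := by
    by_contra hi
    obtain ⟨l, rfl⟩ := (Nat.not_odd_iff_even.mp hi).two_dvd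
    have hx : (d * ((g ^ 5) ^ l)⁻¹) ^ 2 = 1 := by
      rw [((hdg.pow_right l).inv_right).mul_pow, ← hk, inv_pow, ← pow_mul, ← pow_mul,
        show 5 * (2 * l) = 5 * (l * 2) by ring, mul_inv_cancel]
    have hgl : (g ^ 5) ^ l ∈ C := C.pow_mem (C.pow_mem hgC 5) l
    by_cases h1 : d * ((g ^ 5) ^ l)⁻¹ = 1
    · exact hdC (mul_inv_eq_one.mp h1 ▸ hgl)
    · have := hinv _ (g ^ 20) h1 hx hg20 (by rw [← pow_mul, hg40])
      exact hdC (mul_inv_eq_iff_eq_mul.mp this ▸ C.mul_mem (C.pow_mem hgC 20) hgl)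
  have hd8 : d ^ 8 ≠ 1 := by
    intro h
    have : g ^ (5 * i * 4) = 1 := by rw [pow_mul, hk, ← pow_mul, h]
    have := orderOf_dvd_of_pow_eq_one this
    rw [hg] at this
    have := Nat.odd_iff.mp hiodd
    omega
  have hord : orderOf d = 16 := by
    have : Fact (Nat.Prime 2) := ⟨Nat.prime_two⟩
    exact orderOf_eq_prime_pow (p := 2) (n := 3) hd8 hd16
  refine Metacyclic.nonempty_mulEquiv hH ha hord ?_
  have h2 := (hmemC _).mp (C.inv_mem hd2C)
  calc d⁻¹ * a * d = d * ((d ^ 2)⁻¹ * a * (d ^ 2)⁻¹⁻¹) * d⁻¹ := by group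
    _ = a ^ 4 := by rw [h2, hdconj]

end GroupOfOrderEighty

/-- The endomorphism ring representation attached to an action by automorphisms on a commutative
group. -/
def addEndOfMulAut {H W : Type*} [Group H] [CommGroup W] (φ : H →* MulAut W) :
    H →* AddMonoid.End (Additive W) where
  toFun h := MonoidHom.toAdditive (φ h).toMonoidHom
  map_one' := AddMonoidHom.ext fun x => by
    change Additive.ofMul (φ 1 x.toMul) = x
    rw [map_one]
    rfl
  map_mul' g h := AddMonoidHom.ext fun x => by
    change Additive.ofMul (φ (g * h) x.toMul) = Additive.ofMul (φ g (φ h x.toMul))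
    rw [map_mul]
    rfl

theorem AddMonoid.End.nontrivial (A : Type*) [AddCommGroup A] [Nontrivial A] :
    Nontrivial (AddMonoid.End A) := by
  obtain ⟨v, hv⟩ := exists_ne (0 : A)
  exact ⟨1, 0, fun h => hv (DFunLike.congr_fun h v)⟩

namespace IsFrobeniusAction

variable {H W : Type*} [Group H] [CommGroup W] {φ : H →* MulAut W} {a : H}

theorem addEndOfMulAut_injective [Nontrivial W] (hφ : IsFrobeniusAction φ) :
    Function.Injective (addEndOfMulAut φ) := by
  intro g h e
  obtain ⟨w, hw⟩ := exists_ne (1 : W)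
  exact hφ.eq_of_apply_eq hw (congrArg Additive.toMul (DFunLike.congr_fun e (Additive.ofMul w)))

/-- An element of order `5` acting without fixed points on a group of order `81` acts
irreducibly. -/
theorem eq_top_of_invariant [Finite W] (hφ : IsFrobeniusAction φ) (hW : Nat.card W = 81)
    (ha : orderOf a = 5) (U : AddSubgroup (Additive W)) (hU : U ≠ ⊥)
    (hUa : ∀ u ∈ U, addEndOfMulAut φ a u ∈ U) : U = ⊤ := by
  have hψ : IsFrobeniusAction (φ.comp (Subgroup.zpowers a).subtype) :=
    fun h hh => hφ h (by simpa using hh)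
  have hfin : IsOfFinOrder a := orderOf_pos_iff.mp (by omega)
  have hpow : ∀ (n : ℕ), ∀ u ∈ U, addEndOfMulAut φ (a ^ n) u ∈ U := by
    intro n
    induction n with
    | zero => intro u hu; simpa using hu
    | succ n ih => intro u hu; rw [pow_succ, map_mul]; exact ih _ (hUa u hu)
  have h5 := hψ.card_dvd_card_subgroup_sub_one (AddSubgroup.toSubgroup' U) (by
    rintro ⟨h, hh⟩ w hw
    rw [← hfin.mem_powers_iff_mem_zpowers] at hh
    obtain ⟨n, rfl⟩ := hh
    exact hpow n (Additive.ofMul w) hw)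
  rw [Nat.card_zpowers, ha] at h5
  have hcard : Nat.card (AddSubgroup.toSubgroup' U) = Nat.card U := rfl
  rw [hcard] at h5
  have hW' : Nat.card (Additive W) = 81 := hW
  have hdvd := U.card_addSubgroup_dvd_card
  have h1 : 1 < Nat.card U := by
    rw [AddSubgroup.one_lt_card_iff_ne_bot]
    exact hU
  rw [hW', show 81 = 3 ^ 4 from rfl, Nat.dvd_prime_pow Nat.prime_three] at hdvd
  obtain ⟨k, hk, e⟩ := hdvd
  rw [e] at h5 h1
  refine AddSubgroup.eq_top_of_card_eq U ?_
  rw [hW', e]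
  interval_cases k <;> omega

theorem injective_of_commute [Finite W] (hφ : IsFrobeniusAction φ) (hW : Nat.card W = 81)
    (ha : orderOf a = 5) {x : AddMonoid.End (Additive W)} (hx : x ≠ 0)
    (hxa : Commute x (addEndOfMulAut φ a)) : Function.Injective x := by
  rw [injective_iff_map_eq_zero]
  by_contra! h
  obtain ⟨v, hv, hv0⟩ := h
  have htop := hφ.eq_top_of_invariant hW ha (AddMonoidHom.ker x)
    (fun h => hv0 ((AddSubgroup.mem_bot).mp (h ▸ hv : v ∈ (⊥ : AddSubgroup (Additive W)))))
    (fun u hu => by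
      have h1 : x (addEndOfMulAut φ a u) = addEndOfMulAut φ a (x u) :=
        DFunLike.congr_fun hxa.eq u
      have h2 : x u = 0 := hu
      change x (addEndOfMulAut φ a u) = 0
      rw [h1, h2, map_zero])
  refine hx (AddMonoidHom.ext fun u => ?_)
  have : u ∈ AddMonoidHom.ker x := htop ▸ AddSubgroup.mem_top u
  exact this

theorem commute_of_mem_closure {x : AddMonoid.End (Additive W)}
    (hx : x ∈ Subring.closure {addEndOfMulAut φ a}) : Commute x (addEndOfMulAut φ a) := by
  induction hx using Subring.closure_induction with
  | mem x hx => rw [Set.mem_singleton_iff.mp hx]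
  | zero => exact Commute.zero_left _
  | one => exact Commute.one_left _
  | add x y _ _ hx hy => exact hx.add_left hy
  | neg x _ hx => exact hx.neg_left
  | mul x y _ _ hx hy => exact hx.mul_left hy

/-- Endomorphisms commuting with an irreducible endomorphism of order `5` are polynomials in it. -/
theorem mem_closure_of_commute [Finite W] (hφ : IsFrobeniusAction φ) (hW : Nat.card W = 81)
    (ha : orderOf a = 5) {x : AddMonoid.End (Additive W)}
    (hxa : Commute x (addEndOfMulAut φ a)) : x ∈ Subring.closure {addEndOfMulAut φ a} := by
  have : Nontrivial W := Finite.one_lt_card_iff_nontrivial.mp (by omega)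
  obtain ⟨v, hv⟩ := exists_ne (0 : Additive W)
  set R := Subring.closure {addEndOfMulAut φ a}
  have haR : addEndOfMulAut φ a ∈ R := Subring.subset_closure rfl
  let ev : AddMonoid.End (Additive W) →+ Additive W := AddMonoidHom.eval v
  let U : AddSubgroup (Additive W) := R.toAddSubgroup.map ev
  have hvU : v ∈ U := ⟨1, R.one_mem, rfl⟩
  have htop : U = ⊤ := hφ.eq_top_of_invariant hW ha U
    (fun h => hv ((AddSubgroup.mem_bot).mp (h ▸ hvU)))
    (by
      rintro _ ⟨y, hy, rfl⟩
      exact ⟨addEndOfMulAut φ a * y, R.mul_mem haR hy, rfl⟩)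
  obtain ⟨y, hy, hyx⟩ : x v ∈ U := htop ▸ AddSubgroup.mem_top _
  have hyx : y v = x v := hyx
  have hcomm : Commute (x - y) (addEndOfMulAut φ a) :=
    hxa.sub_left (commute_of_mem_closure hy)
  by_contra hxR
  have hne : x - y ≠ 0 := fun h => hxR (sub_eq_zero.mp h ▸ hy)
  have h0 : (x - y) v = 0 := by
    change x v - y v = 0
    rw [hyx, sub_self]
  exact hv (hφ.injective_of_commute hW ha hne hcomm (h0.trans (map_zero _).symm))

theorem isCyclic_centralizer [Finite H] [Finite W] (hφ : IsFrobeniusAction φ) (hW : Nat.card W = 81)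
    (ha : orderOf a = 5) : IsCyclic (Subgroup.centralizer {a}) := by
  have : Nontrivial W := Finite.one_lt_card_iff_nontrivial.mp (by omega)
  set R := Subring.closure {addEndOfMulAut φ a}
  have hR : IsMulCommutative R := Subring.isMulCommutative_closure (by
    rintro x rfl y rfl
    rfl)
  have hdom : NoZeroDivisors R := ⟨by
    intro x y hxy
    by_contra! h
    have hinj := hφ.injective_of_commute hW ha (x := x) (fun h0 => h.1 (Subtype.ext h0))
      (commute_of_mem_closure x.2)
    refine h.2 (Subtype.ext (AddMonoidHom.ext fun v => hinj ?_))
    have h1 : (x * y).1 v = 0 := by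
      rw [hxy]
      rfl
    exact h1.trans (map_zero x.1).symm⟩
  have := AddMonoid.End.nontrivial (Additive W)
  let _ : CommRing R := { R.toRing with mul_comm := hR.is_comm.comm }
  have hR' : IsDomain R := NoZeroDivisors.to_isDomain R
  let f : Subgroup.centralizer {a} →* R :=
    ((addEndOfMulAut φ).comp (Subgroup.centralizer {a}).subtype).codRestrict R (fun c =>
      hφ.mem_closure_of_commute hW ha (by
        have := (Subgroup.mem_centralizer_singleton_iff.mp c.2)
        exact (show Commute (c : H) a from this).map (addEndOfMulAut φ)))
  refine isCyclic_of_injective_ringHom f fun c d h => Subtype.ext ?_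
  exact hφ.addEndOfMulAut_injective (congrArg Subtype.val h)

/-- Elements normalizing `⟨a⟩` act on the centralizer of `a` as powers of the Frobenius map. -/
theorem conj_eq_pow_of_mem_centralizer [Finite W] (hφ : IsFrobeniusAction φ) (hW : Nat.card W = 81)
    (hW3 : ∀ w : W, w ^ 3 = 1) (ha : orderOf a = 5) {b : H} {j : ℕ}
    (hb : b * a * b⁻¹ = a ^ 3 ^ j) {c : H} (hc : c ∈ Subgroup.centralizer {a}) :
    b * c * b⁻¹ = c ^ 3 ^ j := by
  have : Nontrivial W := Finite.one_lt_card_iff_nontrivial.mp (by omega)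
  have : Fact (Nat.Prime 3) := ⟨Nat.prime_three⟩
  have := AddMonoid.End.nontrivial (Additive W)
  have hchar : CharP (AddMonoid.End (Additive W)) 3 := by
    rw [CharP.charP_iff_prime_eq_zero Nat.prime_three]
    ext w
    rw [AddMonoid.End.natCast_apply]
    exact hW3 w.toMul
  set R := Subring.closure {addEndOfMulAut φ a} with hRdef
  have hR : IsMulCommutative R := Subring.isMulCommutative_closure (by
    rintro x rfl y rfl
    rfl)
  have hcomm : ∀ x ∈ R, ∀ y ∈ R, Commute x y := fun x hx y hy =>
    congrArg Subtype.val (hR.is_comm.comm (⟨x, hx⟩ : R) ⟨y, hy⟩)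
  set β := addEndOfMulAut φ b
  set γ := addEndOfMulAut φ b⁻¹
  have hγβ : γ * β = 1 := by rw [← map_mul, inv_mul_cancel, map_one]
  have hβγ : β * γ = 1 := by rw [← map_mul, mul_inv_cancel, map_one]
  have key : ∀ x ∈ R, β * x * γ = x ^ 3 ^ j := by
    intro x hx
    induction hx using Subring.closure_induction with
    | mem x hx =>
      rw [Set.mem_singleton_iff.mp hx, ← map_mul, ← map_mul, hb, map_pow]
    | zero => simp
    | one => rw [mul_one, hβγ, one_pow]
    | add x y hx hy ihx ihy =>
      rw [mul_add, add_mul, ihx, ihy, add_pow_char_pow_of_commute _ _ (hcomm x hx y hy)]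
    | neg x _ ihx =>
      have h1 : β * -x = -(β * x) := mul_neg β x
      have h2 : -(β * x) * γ = -(β * x * γ) := neg_mul _ γ
      rw [h1, h2, ihx]
      exact (Odd.neg_pow (Odd.pow (by decide)) x).symm
    | mul x y hx hy ihx ihy =>
      rw [(hcomm x hx y hy).mul_pow, ← ihx, ← ihy]
      calc β * (x * y) * γ = β * x * 1 * y * γ := by simp only [mul_assoc, one_mul]
        _ = β * x * γ * (β * y * γ) := by rw [← hγβ]; simp only [mul_assoc]
  refine hφ.addEndOfMulAut_injective ?_
  rw [map_mul, map_mul, map_pow]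
  refine key _ (hφ.mem_closure_of_commute hW ha ?_)
  exact (show Commute c a from Subgroup.mem_centralizer_singleton_iff.mp hc).map (addEndOfMulAut φ)

end IsFrobeniusAction

/-- In a group of order `80`, the number of elements of order `5` divides `80` only if there is
a normal subgroup of order `5`. -/
theorem exists_normal_zpowers_of_card_eq_eighty {H : Type*} [Group H] (hH : Nat.card H = 80)
    (h5 : orderCount H 5 ∣ 80) : ∃ a : H, orderOf a = 5 ∧ (Subgroup.zpowers a).Normal := by
  have : Finite H := Nat.finite_of_card_ne_zero (by omega)
  have : Fact (Nat.Prime 5) := ⟨Nat.prime_five⟩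
  have hP : ∀ P : Sylow 5 H, Nat.card P = 5 := fun P => by
    rw [P.card_eq_multiplicity, hH, show 80 = 5 ^ 1 * 16 from rfl,
      Nat.factorization_mul (by norm_num) (by norm_num)]
    simp [Nat.prime_five.factorization_self, Nat.factorization_eq_zero_of_not_dvd]
  have horder : ∀ (P : Sylow 5 H) (x : P), x ≠ 1 → orderOf (x : H) = 5 := fun P x hx => by
    have hd : orderOf (x : H) ∣ 5 :=
      Subgroup.orderOf_coe x ▸ (orderOf_dvd_natCard x).trans (hP P).dvd
    refine ((Nat.dvd_prime Nat.prime_five).mp hd).resolve_left fun h => hx ?_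
    exact Subtype.ext (orderOf_eq_one_iff.mp h)
  have hzpowers : ∀ (P : Sylow 5 H) (g : H), orderOf g = 5 → g ∈ P →
      Subgroup.zpowers g = P := fun P g hg hgP =>
    Subgroup.eq_of_le_of_card_ge (Subgroup.zpowers_le.mpr hgP) (by
      rw [Nat.card_zpowers, hg]; exact (hP P).le)
  have hcount : orderCount H 5 = Nat.card (Sylow 5 H) * 4 := by
    let f : (Σ P : Sylow 5 H, {x : P // x ≠ 1}) → {g : H // orderOf g = 5} :=
      fun y => ⟨y.2.1, horder y.1 y.2.1 y.2.2⟩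
    have hf : Function.Bijective f := by
      constructor
      · rintro ⟨P, x, hx⟩ ⟨Q, y, hy⟩ e
        have e' : (x : H) = y := congrArg Subtype.val e
        obtain rfl : P = Q := Sylow.ext (by
          rw [← hzpowers P x (horder P x hx) x.2, ← hzpowers Q y (horder Q y hy) y.2, e'])
        obtain rfl : x = y := Subtype.ext e'
        rfl
      · rintro ⟨g, hg⟩
        obtain ⟨P, hP'⟩ := (IsPGroup.of_card (p := 5) (n := 1)
          (by rw [Nat.card_zpowers, hg, pow_one]) :
          IsPGroup 5 (Subgroup.zpowers g)).exists_le_sylow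
        refine ⟨⟨P, ⟨g, hP' (Subgroup.mem_zpowers g)⟩, fun h => ?_⟩, rfl⟩
        have : g = 1 := congrArg Subtype.val h
        rw [this, orderOf_one] at hg
        omega
    have : Fintype (Sylow 5 H) := Fintype.ofFinite _
    rw [orderCount, ← Nat.card_congr (Equiv.ofBijective f hf), Nat.card_sigma]
    have h4 : ∀ P : Sylow 5 H, Nat.card {x : P // x ≠ 1} = 4 := fun P => by
      classical
      have : Fintype P := Fintype.ofFinite _
      have hP5 : Fintype.card P = 5 := Nat.card_eq_fintype_card.symm.trans (hP P)
      rw [Nat.card_eq_fintype_card, Fintype.card_subtype_compl, Fintype.card_subtype_eq]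
      exact congrArg (· - 1) hP5
    simp [h4]
  have hmod : Nat.card (Sylow 5 H) % 5 = 1 := card_sylow_modEq_one 5 H
  rw [hcount] at h5
  have h20 : Nat.card (Sylow 5 H) ∣ 20 := Nat.dvd_of_mul_dvd_mul_right (k := 4) (by norm_num) h5
  have h1 : Nat.card (Sylow 5 H) = 1 := by
    have hle := Nat.le_of_dvd (by norm_num) h20
    generalize Nat.card (Sylow 5 H) = n at *
    interval_cases n <;> omega
  have := (Nat.card_eq_one_iff_unique.mp h1).1
  obtain ⟨P⟩ := (inferInstance : Nonempty (Sylow 5 H))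
  have : Nontrivial P := Finite.one_lt_card_iff_nontrivial.mp (by rw [hP P]; norm_num)
  obtain ⟨x, hx⟩ := exists_ne (1 : P)
  exact ⟨x, horder P x hx, hzpowers P x (horder P x hx) x.2 ▸ P.normal_of_subsingleton⟩

namespace IsFrobeniusAction

/-- The restriction of an action by automorphisms to an invariant subgroup. -/
def restrictMulAut {H K : Type*} [Group H] [Group K] (φ : H →* MulAut K) (V : Subgroup K)
    (hV : ∀ h, ∀ v ∈ V, φ h v ∈ V) : H →* MulAut V where
  toFun h :=
    { toFun := fun v => ⟨φ h v, hV h v v.2⟩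
      invFun := fun v => ⟨φ h⁻¹ v, hV h⁻¹ v v.2⟩
      left_inv := fun v => Subtype.ext (by simp)
      right_inv := fun v => Subtype.ext (by simp)
      map_mul' := fun v w => Subtype.ext (map_mul (φ h) v.1 w.1) }
  map_one' := by ext v; simp
  map_mul' g h := by ext v; simp

variable {H A : Type*} [Group H] [CommGroup A] {φ : H →* MulAut A}

/-- A Frobenius complement acting on a subgroup of prime order is commutative. -/
theorem mul_comm_of_card_pow_eq_one {p : ℕ} (hφ : IsFrobeniusAction φ) (hp : p.Prime)
    (hV : Nat.card {x : A // x ^ p = 1} = p) (g h : H) : g * h = h * g := by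
  have hV' : Nat.card (powMonoidHom p : A →* A).ker = p := hV
  have : Fact p.Prime := ⟨hp⟩
  obtain ⟨v, hv⟩ := (isCyclic_of_prime_card hV').exists_generator
  have hv1 : (v : A) ≠ 1 := fun h1 => by
    have : Subsingleton (powMonoidHom p : A →* A).ker := ⟨fun x y => by
      have hv' : v = 1 := Subtype.ext h1
      have hx := hv x
      have hy := hv y
      rw [hv', Subgroup.zpowers_one_eq_bot, Subgroup.mem_bot] at hx hy
      rw [hx, hy]⟩
    exact hp.one_lt.ne' (hV' ▸ Nat.card_eq_one_iff_unique.mpr ⟨this, ⟨1⟩⟩)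
  have hact : ∀ g : H, ∃ m : ℤ, φ g v = (v : A) ^ m := fun g => by
    have hmem : φ g v ∈ (powMonoidHom p : A →* A).ker := by
      have hvp : (v : A) ^ p = 1 := v.2
      change φ g v ^ p = 1
      rw [← map_pow, hvp, map_one]
    obtain ⟨m, hm⟩ := Subgroup.mem_zpowers_iff.mp (hv ⟨φ g v, hmem⟩)
    exact ⟨m, (congrArg Subtype.val hm).symm⟩
  obtain ⟨m, hm⟩ := hact g
  obtain ⟨n, hn⟩ := hact h
  refine hφ.eq_of_apply_eq hv1 ?_
  rw [map_mul, map_mul, MulAut.mul_apply, MulAut.mul_apply, hm, hn, map_zpow, map_zpow, hm, hn,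
    ← zpow_mul, ← zpow_mul, mul_comm]

/-- A noncommutative Frobenius complement of order `80` acting on an abelian group with `81`
elements of order dividing `3`. -/
theorem nonempty_mulEquiv_metacyclic [Finite A] (hφ : IsFrobeniusAction φ) (hH : Nat.card H = 80)
    (hA : Nat.card {x : A // x ^ 3 = 1} = 81) (h5 : orderCount H 5 ∣ 80)
    (hcomm : ¬ ∀ x y : H, x * y = y * x) : Nonempty (H ≃* Metacyclic 5 16 4) := by
  have : Finite H := Nat.finite_of_card_ne_zero (by omega)
  have hinv : ∀ h, ∀ v ∈ (powMonoidHom 3 : A →* A).ker, φ h v ∈ (powMonoidHom 3 : A →* A).ker := by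
    intro h v hv
    change φ h v ^ 3 = 1
    have hv3 : v ^ 3 = 1 := hv
    rw [← map_pow, hv3, map_one]
  have hψ : IsFrobeniusAction (restrictMulAut φ (powMonoidHom 3 : A →* A).ker hinv) :=
    fun h hh v hv => Subtype.ext (hφ h hh v (congrArg Subtype.val hv))
  have hV : Nat.card (powMonoidHom 3 : A →* A).ker = 81 := hA
  have : Nontrivial (powMonoidHom 3 : A →* A).ker :=
    Finite.one_lt_card_iff_nontrivial.mp (by omega)
  obtain ⟨a, ha, hN⟩ := exists_normal_zpowers_of_card_eq_eighty hH h5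
  exact _root_.nonempty_mulEquiv_metacyclic hH ha hN (hψ.isCyclic_centralizer hV ha)
    (fun b j hb c hc =>
      hψ.conj_eq_pow_of_mem_centralizer hV (fun w => Subtype.ext w.2) ha hb hc)
    (fun s t hs hs2 ht ht2 => hψ.eq_of_sq_eq_one hs hs2 ht ht2) hcomm

/-- A noncommutative Frobenius `{2, 5}`-complement acting on an abelian group, subject to the
divisibility conditions on the numbers of elements of given order. -/
theorem homocyclic_and_metacyclic_of_orderCount_dvd [Finite A] [Nontrivial A]
    (hφ : IsFrobeniusAction φ) (h2 : 2 ∣ Nat.card H) (h5 : 5 ∣ Nat.card H)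
    (hH0 : Nat.card H ≠ 0) (hdiv : ∀ p : ℕ, p.Prime → p ∣ Nat.card H → p = 2 ∨ p = 5)
    (hcomm : ¬ ∀ x y : H, x * y = y * x)
    (hA : ∀ n, n ≠ 1 → orderCount A n ≠ 0 → orderCount A n ∣ Nat.card A * Nat.card H)
    (hH5 : orderCount H 5 ∣ Nat.card H) :
    (∃ k : ℕ, 0 < k ∧ Nonempty (A ≃* (Fin 4 → Multiplicative (ZMod (3 ^ k))))) ∧
      Nonempty (H ≃* Metacyclic 5 16 4) := by
  obtain ⟨p, k, r, hp, hk, hcard, hV, he⟩ :=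
    hφ.exists_homocyclic_of_orderCount_dvd (by omega) hH0 hA
  have hr : 1 < r := by
    by_contra! h
    interval_cases r
    · rw [pow_zero] at hcard
      omega
    · exact hcomm (hφ.mul_comm_of_card_pow_eq_one hp (hV.trans (pow_one p)))
  obtain ⟨rfl, rfl⟩ := eq_three_and_four_of_prime_pow_eq hp hr h2 h5 hH0 hdiv hcard
  have hH : Nat.card H = 80 := by omega
  exact ⟨⟨k, hk, he⟩, hφ.nonempty_mulEquiv_metacyclic hH hV (hH ▸ hH5) hcomm⟩

end IsFrobeniusAction

theorem dvd_natCard_of_orderCount_ne_zero {G : Type*} [Group G] [Finite G] {n : ℕ}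
    (h : orderCount G n ≠ 0) : n ∣ Nat.card G := by
  obtain ⟨g, rfl⟩ := orderCount_ne_zero_iff.mp h
  exact orderOf_dvd_natCard g

theorem isNilpotent_of_unique_prime_dvd_card {G : Type*} [Group G] [Finite G] {p : ℕ}
    (hp : p.Prime) (h : ∀ q : ℕ, q.Prime → q ∣ Nat.card G → q = p) : Group.IsNilpotent G := by
  have : Fact p.Prime := ⟨hp⟩
  have hG : IsPGroup p G := IsPGroup.of_card
    (Nat.eq_prime_pow_of_unique_prime_dvd Nat.card_pos.ne' fun {q} hq hd => h q hq hd)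
  exact hG.isNilpotent

theorem orderCount_homocyclic {p k j r : ℕ} (hp : p.Prime) (hj : j + 1 ≤ k) :
    orderCount (Fin r → Multiplicative (ZMod (p ^ k))) (p ^ (j + 1)) =
      (p ^ r) ^ (j + 1) - (p ^ r) ^ j := by
  have : NeZero (p ^ k) := ⟨(pow_pos hp.pos k).ne'⟩
  have hgcd : ∀ i ≤ k, (p ^ k).gcd (p ^ i) = p ^ i := fun i hi =>
    Nat.gcd_eq_right (pow_dvd_pow p hi)
  rw [orderCount_prime_pow hp, card_pow_eq_one_pi_zmod, card_pow_eq_one_pi_zmod]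
  simp only [Finset.prod_const, Finset.card_univ, Fintype.card_fin]
  rw [hgcd _ hj, hgcd j (by omega), ← pow_mul, ← pow_mul, ← pow_mul, ← pow_mul, mul_comm r,
    mul_comm r]

namespace IsFrobeniusWith

variable {G : Type*} [Group G] [Finite G] {K H : Subgroup G}

theorem eq_one_of_orderCount_ne_zero (hF : IsFrobeniusWith K H) {n : ℕ}
    (hK : orderCount K n ≠ 0) (hH : orderCount H n ≠ 0) : n = 1 := by
  have := hF.2.2.1
  exact Nat.eq_one_of_dvd_coprimes hF.isFrobeniusAction.coprime_card
    (dvd_natCard_of_orderCount_ne_zero hH) (dvd_natCard_of_orderCount_ne_zero hK)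

theorem homocyclic_and_metacyclic_of_perfectOrderClasses (hF : IsFrobeniusWith K H)
    (hnotnil : ¬ Group.IsNilpotent H)
    (hdiv : ∀ p : ℕ, p.Prime → p ∣ Nat.card H → p = 2 ∨ p = 5) (hG : PerfectOrderClasses G) :
    (∃ k : ℕ, 0 < k ∧ Nonempty (K ≃* (Fin 4 → Multiplicative (ZMod (3 ^ k))))) ∧
      Nonempty (H ≃* Metacyclic 5 16 4) := by
  have := hF.2.2.1
  have hφ := hF.isFrobeniusAction
  have h2 : 2 ∣ Nat.card H := by
    by_contra h
    refine hnotnil (isNilpotent_of_unique_prime_dvd_card Nat.prime_five fun q hq hd => ?_)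
    exact (hdiv q hq hd).resolve_left fun e => h (e ▸ hd)
  have h5 : 5 ∣ Nat.card H := by
    by_contra h
    refine hnotnil (isNilpotent_of_unique_prime_dvd_card Nat.prime_two fun q hq hd => ?_)
    exact (hdiv q hq hd).resolve_right fun e => h (e ▸ hd)
  have hcomm : ¬ ∀ x y : H, x * y = y * x := fun h => by
    let _ : CommGroup H := { (inferInstance : Group H) with mul_comm := h }
    exact hnotnil (CommGroup.isNilpotent (G := H))
  have hpos : ∀ n : ℕ, orderCount G n ≠ 0 → 0 < n := fun n hn =>
    Nat.pos_of_dvd_of_pos (dvd_natCard_of_orderCount_ne_zero hn) Nat.card_pos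
  have hdvd : ∀ n : ℕ, orderCount G n ≠ 0 → orderCount G n ∣ Nat.card K * Nat.card H :=
    fun n hn => hF.card_eq ▸ (hG n (hpos n hn)).resolve_left hn
  have hA : ∀ n, n ≠ 1 → orderCount K n ≠ 0 → orderCount K n ∣ Nat.card K * Nat.card H := by
    intro n hn hK
    have hH : orderCount H n = 0 := by
      by_contra h
      exact hn (hF.eq_one_of_orderCount_ne_zero hK h)
    have e := hF.orderCount_eq hn
    rw [hH, mul_zero, add_zero] at e
    exact e ▸ hdvd n (e ▸ hK)
  have hH5 : orderCount H 5 ∣ Nat.card H := by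
    have : Fact (Nat.Prime 5) := ⟨Nat.prime_five⟩
    obtain ⟨a, ha⟩ := exists_prime_orderOf_dvd_card' 5 h5
    have hH : orderCount H 5 ≠ 0 := orderCount_ne_zero_iff.mpr ⟨a, ha⟩
    have hK : orderCount K 5 = 0 := by
      by_contra h
      exact absurd (hF.eq_one_of_orderCount_ne_zero h hH) (by norm_num)
    have e := hF.orderCount_eq (n := 5) (by norm_num)
    rw [hK, zero_add] at e
    have hK0 : 0 < Nat.card K := Nat.card_pos
    exact Nat.dvd_of_mul_dvd_mul_left hK0 (e ▸ hdvd 5 (e ▸ mul_ne_zero hK0.ne' hH))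
  have : Nontrivial K := K.nontrivial_iff_ne_bot.mpr hF.1
  have hH0 : Nat.card H ≠ 0 := Nat.card_pos.ne'
  let _ : CommGroup K :=
    { (inferInstance : Group K) with mul_comm := hφ.mul_comm_of_two_dvd_card h2 }
  exact hφ.homocyclic_and_metacyclic_of_orderCount_dvd h2 h5 hH0 hdiv hcomm hA hH5

theorem perfectOrderClasses_of_homocyclic_of_metacyclic (hF : IsFrobeniusWith K H) {k : ℕ}
    (eK : K ≃* (Fin 4 → Multiplicative (ZMod (3 ^ k)))) (eH : H ≃* Metacyclic 5 16 4) :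
    PerfectOrderClasses G := by
  have hK : Nat.card K = 81 ^ k := by
    rw [Nat.card_congr eK.toEquiv, Nat.card_pi]
    simp [← pow_mul, mul_comm k, pow_mul 3 4 k]
  have hH : Nat.card H = 80 := (Nat.card_congr eH.toEquiv).trans Metacyclic.card_eq
  intro n hn
  rw [hF.card_eq]
  rcases eq_or_ne n 1 with rfl | hn1
  · right
    simp [orderCount]
  rw [hF.orderCount_eq hn1]
  rcases eq_or_ne (orderCount K n) 0 with h0 | h0
  · rw [h0, zero_add, orderCount_congr eH n]
    rcases Metacyclic.perfectOrderClasses n hn with h | h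
    · left
      rw [h, mul_zero]
    · right
      rw [← Nat.card_congr eH.toEquiv] at h
      exact mul_dvd_mul_left _ h
  · right
    have hH0 : orderCount H n = 0 := by
      by_contra h
      exact hn1 (hF.eq_one_of_orderCount_ne_zero h0 h)
    rw [hH0, mul_zero, add_zero, orderCount_congr eK n, hK, hH]
    rw [orderCount_congr eK n] at h0
    obtain ⟨x, hx⟩ := orderCount_ne_zero_iff.mp h0
    have hxk : x ^ 3 ^ k = 1 := funext fun i =>
      Multiplicative.toAdd.injective (by simp)
    obtain ⟨i, hi, rfl⟩ :=
      (Nat.dvd_prime_pow Nat.prime_three).mp (hx ▸ orderOf_dvd_of_pow_eq_one hxk)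
    obtain ⟨j, rfl⟩ : ∃ j, i = j + 1 :=
      Nat.exists_eq_succ_of_ne_zero fun h => hn1 (by rw [h, pow_zero])
    rw [orderCount_homocyclic Nat.prime_three hi]
    have e : (3 ^ 4) ^ (j + 1) - (3 ^ 4) ^ j = 81 ^ j * 80 := by
      rw [pow_succ]
      norm_num
      omega
    rw [e]
    exact mul_dvd_mul_right (pow_dvd_pow 81 (by omega)) 80

end IsFrobeniusWith

/-- Frobenius groups with a non-nilpotent `{2,5}`-complement have perfect order classes
iff the kernel is a homocyclic 3-group of rank 4 and the complement is
`⟨a, b ∣ a^5 = 1, b^16 = 1, b⁻¹ a b = a^4⟩`. -/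
theorem frobenius_two_five_complement_perfectOrderClasses_iff
    {G : Type*} [Group G] [Fintype G] (K H : Subgroup G)
    (hFrob : IsFrobeniusWith K H)
    (hnotnil : ¬ Group.IsNilpotent H)
    (hdiv : ∀ p : ℕ, p.Prime → p ∣ Nat.card H → p = 2 ∨ p = 5) :
    PerfectOrderClasses G ↔
      (∃ k : ℕ, 0 < k ∧
        Nonempty (K ≃* (Fin 4 → Multiplicative (ZMod (3 ^ k))))) ∧
        Nonempty (H ≃* Metacyclic 5 16 4) := by
  constructor
  · exact hFrob.homocyclic_and_metacyclic_of_perfectOrderClasses hnotnil hdiv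
  · rintro ⟨⟨k, -, ⟨eK⟩⟩, ⟨eH⟩⟩
    exact hFrob.perfectOrderClasses_of_homocyclic_of_metacyclic eK eH
end

section
/- If n is a positive integer such that n² - 1 is divisible by 2, 3 and 5, and by no other prime, then n ∈ {11, 19, 31, 49, 161}. -/
/-- Every prime divisor of `y` is `2`, `3` or `5`. In particular `y ≠ 0`. -/
def IsFiveSmooth (y : ℕ) : Prop :=
  ∀ p : ℕ, p.Prime → p ∣ y → p = 2 ∨ p = 3 ∨ p = 5

namespace IsFiveSmooth

lemma ne_zero {y : ℕ} (hy : IsFiveSmooth y) : y ≠ 0 := by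
  rintro rfl
  have := hy 7 (by norm_num) (dvd_zero 7)
  omega

lemma of_dvd {x y : ℕ} (hy : IsFiveSmooth y) (h : x ∣ y) : IsFiveSmooth x :=
  fun p hp hpx => hy p hp (hpx.trans h)

lemma exists_eq_pow {x p : ℕ} (hx : IsFiveSmooth x)
    (h : ∀ q, q = 2 ∨ q = 3 ∨ q = 5 → q ∣ x → q = p) : ∃ k, x = p ^ k :=
  ⟨_, Nat.eq_prime_pow_of_unique_prime_dvd hx.ne_zero fun {q} hq hqx => h q (hx q hq hqx) hqx⟩

lemma dvd_of_not_dvd {y a b c : ℕ} (hy : IsFiveSmooth y) (h2 : ¬ 2 ^ (a + 1) ∣ y)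
    (h3 : ¬ 3 ^ (b + 1) ∣ y) (h5 : ¬ 5 ^ (c + 1) ∣ y) : y ∣ 2 ^ a * 3 ^ b * 5 ^ c := by
  rw [Nat.dvd_iff_prime_pow_dvd_dvd]
  intro p k hp hk
  rcases Nat.eq_zero_or_pos k with rfl | hk0
  · simp
  rcases hy p hp ((dvd_pow_self p hk0.ne').trans hk) with rfl | rfl | rfl
  · have hka : k ≤ a := by
      by_contra! hlt
      exact h2 ((pow_dvd_pow 2 hlt).trans hk)
    exact ((pow_dvd_pow 2 hka).mul_right _).mul_right _
  · have hkb : k ≤ b := by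
      by_contra! hlt
      exact h3 ((pow_dvd_pow 3 hlt).trans hk)
    exact ((pow_dvd_pow 3 hkb).mul_left _).mul_right _
  · have hkc : k ≤ c := by
      by_contra! hlt
      exact h5 ((pow_dvd_pow 5 hlt).trans hk)
    exact (pow_dvd_pow 5 hkc).mul_left _

end IsFiveSmooth

lemma dvd_pow_add_iff_mod {m p s : ℤ} {d : ℕ} (k : ℕ) (hm : m ∣ p ^ d - 1) :
    m ∣ p ^ k + s ↔ m ∣ p ^ (k % d) + s := by
  have hmod : p ^ k ≡ p ^ (k % d) [ZMOD m] := by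
    have hd : p ^ d ≡ 1 [ZMOD m] := (Int.modEq_iff_dvd.2 hm).symm
    calc p ^ k = p ^ (k % d) * (p ^ d) ^ (k / d) := by
          rw [← pow_mul, ← pow_add, Nat.mod_add_div]
      _ ≡ p ^ (k % d) * 1 ^ (k / d) [ZMOD m] := (hd.pow _).mul_left _
      _ = p ^ (k % d) := by simp
  exact (hmod.add_right s).dvd_iff

/-- If divisibility by `a` forces divisibility by `b` on one period of `k ↦ p ^ k + s`,
it does so for every `k`. -/
lemma dvd_of_dvd_of_period {p d a b k y : ℕ} {s : ℤ} (hyk : (y : ℤ) = (p : ℤ) ^ k + s)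
    (hd : 0 < d) (ha : (a : ℤ) ∣ (p : ℤ) ^ d - 1) (hb : (b : ℤ) ∣ (p : ℤ) ^ d - 1)
    (h : ∀ r < d, (a : ℤ) ∣ (p : ℤ) ^ r + s → (b : ℤ) ∣ (p : ℤ) ^ r + s) (hay : a ∣ y) :
    b ∣ y := by
  rw [← Int.natCast_dvd_natCast, hyk] at hay ⊢
  rw [dvd_pow_add_iff_mod k ha] at hay
  rw [dvd_pow_add_iff_mod k hb]
  exact h _ (Nat.mod_lt _ hd) hay

lemma IsFiveSmooth.not_dvd_of_period {p k y : ℕ} {s : ℤ} (hy : IsFiveSmooth y)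
    (hyk : (y : ℤ) = (p : ℤ) ^ k + s) (d a q : ℕ) (hd : 0 < d) (hq : q.Prime) (hq5 : 5 < q)
    (ha : (a : ℤ) ∣ (p : ℤ) ^ d - 1) (hb : (q : ℤ) ∣ (p : ℤ) ^ d - 1)
    (h : ∀ r < d, (a : ℤ) ∣ (p : ℤ) ^ r + s → (q : ℤ) ∣ (p : ℤ) ^ r + s) : ¬ a ∣ y := by
  intro hay
  have := hy q hq (dvd_of_dvd_of_period hyk hd ha hb h hay)
  omega

lemma eq_fifteen_of_two_pow_sub_one {k y : ℕ} (hy : IsFiveSmooth y)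
    (hyk : (y : ℤ) = ((2 : ℕ) : ℤ) ^ k + (-1)) (h2 : ¬ 2 ∣ y) (h15 : 15 ∣ y) : y = 15 := by
  have h9 : ¬ 9 ∣ y := hy.not_dvd_of_period hyk 6 9 7 (by norm_num) (by norm_num) (by norm_num)
    (by norm_num) (by norm_num) (by decide +kernel)
  have h25 : ¬ 25 ∣ y := hy.not_dvd_of_period hyk 20 25 11 (by norm_num) (by norm_num)
    (by norm_num) (by norm_num) (by norm_num) (by decide +kernel)
  exact Nat.dvd_antisymm (hy.dvd_of_not_dvd (a := 0) (b := 1) (c := 1) h2 h9 h25) h15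

lemma not_fifteen_dvd_two_pow_add_one {k y : ℕ} (hy : IsFiveSmooth y)
    (hyk : (y : ℤ) = ((2 : ℕ) : ℤ) ^ k + 1) : ¬ 15 ∣ y :=
  hy.not_dvd_of_period hyk 12 15 7 (by norm_num) (by norm_num) (by norm_num)
    (by norm_num) (by norm_num) (by decide +kernel)

lemma eq_eighty_of_three_pow_sub_one {k y : ℕ} (hy : IsFiveSmooth y)
    (hyk : (y : ℤ) = ((3 : ℕ) : ℤ) ^ k + (-1)) (h3 : ¬ 3 ∣ y) (h10 : 10 ∣ y) : y = 80 := by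
  have h25 : ¬ 25 ∣ y := hy.not_dvd_of_period hyk 20 25 11 (by norm_num) (by norm_num)
    (by norm_num) (by norm_num) (by norm_num) (by decide +kernel)
  have h32 : ¬ 32 ∣ y := hy.not_dvd_of_period hyk 8 32 41 (by norm_num) (by norm_num)
    (by norm_num) (by norm_num) (by norm_num) (by decide +kernel)
  have h80 : 80 ∣ y := dvd_of_dvd_of_period (d := 4) hyk (by norm_num) (by norm_num)
    (by norm_num) (by decide +kernel) h10
  exact Nat.dvd_antisymm (hy.dvd_of_not_dvd (a := 4) (b := 0) (c := 1) h32 h3 h25) h80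

lemma eq_ten_of_three_pow_add_one {k y : ℕ} (hy : IsFiveSmooth y)
    (hyk : (y : ℤ) = ((3 : ℕ) : ℤ) ^ k + 1) (h3 : ¬ 3 ∣ y) (h10 : 10 ∣ y) : y = 10 := by
  have h20 : ¬ 20 ∣ y := hy.not_dvd_of_period hyk 12 20 7 (by norm_num) (by norm_num)
    (by norm_num) (by norm_num) (by norm_num) (by decide +kernel)
  have h25 : ¬ 25 ∣ y := hy.not_dvd_of_period hyk 20 25 1181 (by norm_num) (by norm_num)
    (by norm_num) (by norm_num) (by norm_num) (by decide +kernel)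
  have h4 : ¬ 4 ∣ y := by omega
  exact Nat.dvd_antisymm (hy.dvd_of_not_dvd (a := 1) (b := 0) (c := 1) h4 h3 h25) h10

lemma eq_twentyFour_of_five_pow_sub_one {k y : ℕ} (hy : IsFiveSmooth y)
    (hyk : (y : ℤ) = ((5 : ℕ) : ℤ) ^ k + (-1)) (h5 : ¬ 5 ∣ y) (h6 : 6 ∣ y) : y = 24 := by
  have h9 : ¬ 9 ∣ y := hy.not_dvd_of_period hyk 6 9 7 (by norm_num) (by norm_num)
    (by norm_num) (by norm_num) (by norm_num) (by decide +kernel)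
  have h16 : ¬ 16 ∣ y := hy.not_dvd_of_period hyk 4 16 13 (by norm_num) (by norm_num)
    (by norm_num) (by norm_num) (by norm_num) (by decide +kernel)
  have h24 : 24 ∣ y := dvd_of_dvd_of_period (d := 2) hyk (by norm_num) (by norm_num)
    (by norm_num) (by decide +kernel) h6
  exact Nat.dvd_antisymm (hy.dvd_of_not_dvd (a := 3) (b := 1) (c := 0) h16 h9 h5) h24

lemma eq_six_of_five_pow_add_one {k y : ℕ} (hy : IsFiveSmooth y)
    (hyk : (y : ℤ) = ((5 : ℕ) : ℤ) ^ k + 1) (h5 : ¬ 5 ∣ y) (h6 : 6 ∣ y) : y = 6 := by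
  have h4 : ¬ 4 ∣ y := hy.not_dvd_of_period hyk 6 4 7 (by norm_num) (by norm_num)
    (by norm_num) (by norm_num) (by norm_num) (by decide +kernel)
  have h9 : ¬ 9 ∣ y := hy.not_dvd_of_period hyk 6 9 7 (by norm_num) (by norm_num)
    (by norm_num) (by norm_num) (by norm_num) (by decide +kernel)
  exact Nat.dvd_antisymm (hy.dvd_of_not_dvd (a := 1) (b := 1) (c := 0) h4 h9 h5) h6

/-- Consecutive `5`-smooth numbers whose product is divisible by `30`. -/
lemma eq_of_consecutive_isFiveSmooth {m : ℕ} (hm : IsFiveSmooth m)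
    (hm1 : IsFiveSmooth (m + 1)) (h3 : 3 ∣ m ∨ 3 ∣ m + 1) (h5 : 5 ∣ m ∨ 5 ∣ m + 1) :
    m = 5 ∨ m = 9 ∨ m = 15 ∨ m = 24 ∨ m = 80 := by
  have h2 : 2 ∣ m ∨ 2 ∣ m + 1 := by omega
  rcases h2 with h2 | h2 <;> rcases h3 with h3 | h3 <;> rcases h5 with h5 | h5
  · obtain ⟨k, hk⟩ := hm1.exists_eq_pow (p := 1) (by rintro q (rfl | rfl | rfl) <;> omega)
    have := hm.ne_zero
    simp at hk
    omega
  · obtain ⟨k, hk⟩ := hm1.exists_eq_pow (p := 5) (by rintro q (rfl | rfl | rfl) <;> omega)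
    have := eq_twentyFour_of_five_pow_sub_one (k := k) hm (by zify at hk; grind) (by omega)
      (by omega)
    omega
  · obtain ⟨k, hk⟩ := hm1.exists_eq_pow (p := 3) (by rintro q (rfl | rfl | rfl) <;> omega)
    have := eq_eighty_of_three_pow_sub_one (k := k) hm (by zify at hk; grind) (by omega)
      (by omega)
    omega
  · obtain ⟨k, hk⟩ := hm.exists_eq_pow (p := 2) (by rintro q (rfl | rfl | rfl) <;> omega)
    exact absurd (by omega) (not_fifteen_dvd_two_pow_add_one (k := k) hm1 (by zify at hk; grind))
  · obtain ⟨k, hk⟩ := hm1.exists_eq_pow (p := 2) (by rintro q (rfl | rfl | rfl) <;> omega)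
    have := eq_fifteen_of_two_pow_sub_one (k := k) hm (by zify at hk; grind) (by omega)
      (by omega)
    omega
  · obtain ⟨k, hk⟩ := hm.exists_eq_pow (p := 3) (by rintro q (rfl | rfl | rfl) <;> omega)
    have := eq_ten_of_three_pow_add_one (k := k) hm1 (by zify at hk; grind) (by omega)
      (by omega)
    omega
  · obtain ⟨k, hk⟩ := hm.exists_eq_pow (p := 5) (by rintro q (rfl | rfl | rfl) <;> omega)
    have := eq_six_of_five_pow_add_one (k := k) hm1 (by zify at hk; grind) (by omega)
      (by omega)
    omega
  · obtain ⟨k, hk⟩ := hm.exists_eq_pow (p := 1) (by rintro q (rfl | rfl | rfl) <;> omega)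
    simp at hk
    omega

/-- If `n` is a positive integer such that `n² - 1` is divisible by `2`, `3` and `5` and by
no other prime, then `n ∈ {11, 19, 31, 49, 161}`. -/
theorem square_minus_one_235 (n : ℕ) (hn : 0 < n)
    (h2 : 2 ∣ n ^ 2 - 1) (h3 : 3 ∣ n ^ 2 - 1) (h5 : 5 ∣ n ^ 2 - 1)
    (hall : ∀ p : ℕ, p.Prime → p ∣ n ^ 2 - 1 → p = 2 ∨ p = 3 ∨ p = 5) :
    n = 11 ∨ n = 19 ∨ n = 31 ∨ n = 49 ∨ n = 161 := by
  have hodd : Odd n := by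
    by_contra hev
    rw [Nat.not_odd_iff_even] at hev
    have : 2 ∣ n ^ 2 := hev.two_dvd.trans (dvd_pow_self n two_ne_zero)
    have : 0 < n ^ 2 := by positivity
    omega
  obtain ⟨m, rfl⟩ := hodd
  have hfac : (2 * m + 1) ^ 2 - 1 = 4 * (m * (m + 1)) := by
    rw [Nat.sub_eq_iff_eq_add (Nat.one_le_pow _ _ hn)]
    ring
  rw [hfac] at h3 h5 hall
  have h3' : 3 ∣ m ∨ 3 ∣ m + 1 :=
    Nat.prime_three.dvd_mul.1 (Nat.Coprime.dvd_of_dvd_mul_left (by norm_num) h3)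
  have h5' : 5 ∣ m ∨ 5 ∣ m + 1 :=
    Nat.prime_five.dvd_mul.1 (Nat.Coprime.dvd_of_dvd_mul_left (by norm_num) h5)
  have hall' : IsFiveSmooth (4 * (m * (m + 1))) := hall
  have := eq_of_consecutive_isFiveSmooth (hall'.of_dvd ((dvd_mul_right m _).mul_left 4))
    (hall'.of_dvd ((dvd_mul_left _ m).mul_left 4)) h3' h5'
  omega
end
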